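/- arXiv:1712.08371 — 2 statements merged into one kernel-verified Lean document; each statement's English description precedes it below -/
import Mathlib

section
/- Let n be a positive integer and b ∈ ℂ with b and b − n not nonpositive integers, and let M be a positive integer. Then as x → +∞ along the positive real axis, (1/Γ(b)) · ₁F₁(n; b; x) − (x^{n−b} e^x / (n−1)!) ∑_{j=0}^{n−1} (b−n)_j (1−n)_j / (j! x^j) = ((−1)^n x^{−n} / Γ(b−n)) · [ ∑_{j=0}^{M−1} (−1)^j (n)_j (1+n−b)_j / (j! x^j) + O(x^{−M}) ]; that is, when a = n is a positive integer the exponential expansion terminates after n terms and the subdominant algebraic expansion on arg z = 0 carries the multiplier (−1)^n = cos(πn), with no half-integer-power corrections. -/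
open Complex Filter Asymptotics

/-- The Kummer confluent hypergeometric function `₁F₁(a; b; z)`,
defined by its everywhere convergent power series. -/
noncomputable def kummer (a b z : ℂ) : ℂ :=
  ∑' n : ℕ, ((ascPochhammer ℂ n).eval a / (ascPochhammer ℂ n).eval b) * z ^ n / n.factorial

/-- Coefficients of the regularised Kummer series. -/
noncomputable def kT (a b : ℂ) (k : ℕ) : ℂ :=
  (ascPochhammer ℂ k).eval a / k.factorial * (Complex.Gamma (b + k))⁻¹

/-- The regularised Kummer function. -/
noncomputable def kF (a b z : ℂ) : ℂ := ∑' k : ℕ, kT a b k * z ^ k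

lemma kT_succ (a b : ℂ) (k : ℕ) :
    kT a b (k + 1) * (b + k) * (k + 1) = kT a b k * (a + k) := by
  have h := Complex.one_div_Gamma_eq_self_mul_one_div_Gamma_add_one (b + k)
  have hk : ((k : ℂ) + 1) ≠ 0 := by exact_mod_cast Nat.succ_ne_zero k
  have hk' : ((k.factorial : ℕ) : ℂ) ≠ 0 := by exact_mod_cast k.factorial_ne_zero
  unfold kT
  rw [h, ascPochhammer_succ_eval, Nat.factorial_succ]
  push_cast
  rw [← add_assoc]
  field_simp

lemma kT_summable (a b : ℂ) (R : ℝ) (hR : 0 ≤ R) :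
    Summable (fun k : ℕ => ((k : ℝ) + 1) * (‖kT a b k‖ * R ^ k)) := by
  refine summable_of_ratio_norm_eventually_le (r := 1 / 2) (by norm_num) ?_
  obtain ⟨N, hN⟩ := exists_nat_ge (‖a‖ + ‖b‖ + 8 * R + 1)
  filter_upwards [eventually_ge_atTop N] with k hk
  have hkN : (N : ℝ) ≤ k := by exact_mod_cast hk
  have ha0 := norm_nonneg a
  have hb0 := norm_nonneg b
  have ha : ‖a + k‖ ≤ 2 * (k + 1) := by
    have := norm_add_le a (k : ℂ)
    rw [Complex.norm_natCast] at this
    linarith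
  have hb : 8 * R + 1 ≤ ‖b + k‖ := by
    have := norm_sub_norm_le (k : ℂ) (-b)
    rw [Complex.norm_natCast, norm_neg, sub_neg_eq_add, add_comm (k : ℂ)] at this
    linarith
  have h := congrArg norm (kT_succ a b k)
  rw [norm_mul, norm_mul, norm_mul] at h
  have hk1 : ‖((k : ℂ) + 1)‖ = k + 1 := by
    rw [← Nat.cast_succ, Complex.norm_natCast]; push_cast; ring
  rw [hk1] at h
  have hk0 : (0 : ℝ) ≤ k := Nat.cast_nonneg k
  have hT := norm_nonneg (kT a b k)
  have hT1 := norm_nonneg (kT a b (k + 1))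
  have h1 : ‖kT a b (k + 1)‖ * (8 * R) ≤ 2 * ‖kT a b k‖ := by
    have h2 : ‖kT a b (k + 1)‖ * ‖b + k‖ * (k + 1) ≤ (2 * ‖kT a b k‖) * (k + 1) := by
      rw [h]; nlinarith
    have h3 := le_of_mul_le_mul_right h2 (by positivity)
    refine le_trans ?_ h3
    gcongr
    linarith
  rw [Real.norm_of_nonneg (by positivity), Real.norm_of_nonneg (by positivity)]
  push_cast
  have hRk : 0 ≤ R ^ k := by positivity
  have h4 : ‖kT a b (k + 1)‖ * R ≤ ‖kT a b k‖ / 4 := by linarith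
  calc ((k : ℝ) + 1 + 1) * (‖kT a b (k + 1)‖ * R ^ (k + 1))
      = ((k : ℝ) + 1 + 1) * R ^ k * (‖kT a b (k + 1)‖ * R) := by ring
    _ ≤ (2 * (k + 1)) * R ^ k * (‖kT a b k‖ / 4) := by gcongr; linarith
    _ = _ := by ring

lemma kF_summable' (a b z : ℂ) : Summable (fun k : ℕ => kT a b k * ((k : ℂ) * z ^ k)) := by
  refine Summable.of_norm_bounded (kT_summable a b ‖z‖ (norm_nonneg z)) fun k => ?_
  rw [norm_mul, norm_mul, norm_pow, Complex.norm_natCast]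
  have : 0 ≤ ‖kT a b k‖ * ‖z‖ ^ k := by positivity
  nlinarith

lemma kF_summable (a b z : ℂ) : Summable (fun k : ℕ => kT a b k * z ^ k) := by
  refine Summable.of_norm_bounded (kT_summable a b ‖z‖ (norm_nonneg z)) fun k => ?_
  rw [norm_mul, norm_pow]
  have : 0 ≤ ‖kT a b k‖ * ‖z‖ ^ k := by positivity
  have hk0 : (0 : ℝ) ≤ k := Nat.cast_nonneg k
  nlinarith

lemma asc_gamma (b : ℂ) (hb : ∀ m : ℕ, b ≠ -(m : ℂ)) (k : ℕ) :
    Complex.Gamma (b + k) = (ascPochhammer ℂ k).eval b * Complex.Gamma b := by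
  induction k with
  | zero => simp
  | succ k ih =>
    rw [ascPochhammer_succ_eval, Nat.cast_succ, ← add_assoc, Complex.Gamma_add_one, ih]
    · ring
    · intro h; exact hb k (eq_neg_of_add_eq_zero_left h)

lemma kummer_eq_kF (a b z : ℂ) (hb : ∀ m : ℕ, b ≠ -(m : ℂ)) :
    (1 / Complex.Gamma b) * kummer a b z = kF a b z := by
  unfold kummer kF
  rw [← tsum_mul_left]
  congr 1; ext k
  unfold kT
  rw [asc_gamma b hb k, mul_inv]
  ring

lemma kF_contig (a b z : ℂ) :
    a * kF (a + 1) b z = (a - b + 1) * kF a b z + kF a (b - 1) z := by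
  unfold kF
  rw [← tsum_mul_left, ← tsum_mul_left, ← Summable.tsum_add]
  · congr 1; ext k
    have h1 : a * (ascPochhammer ℂ k).eval (a + 1) = (ascPochhammer ℂ k).eval a * (a + k) := by
      have := congrArg (Polynomial.eval a) (ascPochhammer_succ_left ℂ k)
      rw [ascPochhammer_succ_eval] at this
      simpa [Polynomial.eval_comp] using this.symm
    have h2 := Complex.one_div_Gamma_eq_self_mul_one_div_Gamma_add_one (b - 1 + k)
    rw [show b - 1 + k + 1 = b + k by ring] at h2
    unfold kT
    rw [h2]
    linear_combination (Complex.Gamma (b + k))⁻¹ * z ^ k / k.factorial * h1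
  · exact (kF_summable a b z).mul_left _
  · exact kF_summable a (b - 1) z

lemma kT_one (b : ℂ) (k : ℕ) : kT 1 b k = (Complex.Gamma (b + k))⁻¹ := by
  unfold kT
  rw [ascPochhammer_eval_one, div_self, one_mul]
  exact_mod_cast k.factorial_ne_zero

lemma kF_one_rec (b z : ℂ) : kF 1 (b - 1) z = (Complex.Gamma (b - 1))⁻¹ + z * kF 1 b z := by
  unfold kF
  rw [(kF_summable 1 (b - 1) z).tsum_eq_zero_add, ← tsum_mul_left]
  congr 1
  · simp [kT_one]
  · congr 1; ext k
    rw [kT_one, kT_one, pow_succ]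
    push_cast
    rw [show b - 1 + (k + 1 : ℂ) = b + k by ring]
    ring

lemma kF_deriv (a b z : ℂ) :
    HasDerivAt (kF a b) (∑' k : ℕ, kT a b k * ((k : ℂ) * z ^ (k - 1))) z := by
  have hR : (1 : ℝ) ≤ ‖z‖ + 1 := by linarith [norm_nonneg z]
  refine hasDerivAt_tsum_of_isPreconnected (g := fun k y => kT a b k * y ^ k)
    (g' := fun k y => kT a b k * ((k : ℂ) * y ^ (k - 1)))
    (kT_summable a b (‖z‖ + 1) (by positivity)) (t := Metric.ball 0 (‖z‖ + 1))
    (y₀ := z) Metric.isOpen_ball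
    (convex_ball _ _).isPreconnected ?_ ?_ ?_ (kF_summable a b z) ?_
  · intro k y _
    exact (hasDerivAt_pow k y).const_mul _
  · intro k y hy
    have hy' : ‖y‖ ≤ ‖z‖ + 1 := by simpa using (Metric.mem_ball.1 hy).le
    rw [norm_mul, norm_mul, norm_pow, Complex.norm_natCast]
    have h1 : ‖y‖ ^ (k - 1) ≤ (‖z‖ + 1) ^ k :=
      (pow_le_pow_left₀ (norm_nonneg _) hy' _).trans (pow_le_pow_right₀ hR (Nat.sub_le k 1))
    calc ‖kT a b k‖ * (k * ‖y‖ ^ (k - 1)) ≤ ‖kT a b k‖ * ((k + 1) * (‖z‖ + 1) ^ k) := by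
          gcongr; linarith
      _ = _ := by ring
  · simp
  · simp

lemma kF_one_ode (b z : ℂ) :
    z * (∑' k : ℕ, kT 1 b k * ((k : ℂ) * z ^ (k - 1))) + (b - 1) * kF 1 b z
      = (Complex.Gamma (b - 1))⁻¹ + z * kF 1 b z := by
  rw [← kF_one_rec]
  have h : z * (∑' k : ℕ, kT 1 b k * ((k : ℂ) * z ^ (k - 1)))
      = ∑' k : ℕ, kT 1 b k * ((k : ℂ) * z ^ k) := by
    rw [← tsum_mul_left]
    congr 1; ext k
    cases k with
    | zero => simp
    | succ k => simp; ring
  rw [h]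
  unfold kF
  rw [← tsum_mul_left, ← Summable.tsum_add (kF_summable' 1 b z) ((kF_summable 1 b z).mul_left _)]
  congr 1; ext k
  have h2 := Complex.one_div_Gamma_eq_self_mul_one_div_Gamma_add_one (b - 1 + k)
  rw [show b - 1 + k + 1 = b + k by ring] at h2
  rw [kT_one, kT_one, h2]
  ring

/-- Normalised function: tends to one at infinity. -/
noncomputable def kH (b : ℂ) (x : ℝ) : ℂ :=
  Complex.exp (-(x : ℂ)) * (x : ℂ) ^ (b - 1) * kF 1 b x

lemma kH_deriv (b : ℂ) (x : ℝ) (hx : 0 < x) :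
    HasDerivAt (kH b) (Complex.exp (-(x : ℂ)) * (x : ℂ) ^ (b - 2) * (Complex.Gamma (b - 1))⁻¹) x := by
  have hx0 : (x : ℂ) ≠ 0 := by exact_mod_cast hx.ne'
  have h1 : HasDerivAt (fun z : ℂ => Complex.exp (-z)) (-Complex.exp (-(x : ℂ))) (x : ℂ) := by
    simpa using (hasDerivAt_neg (x : ℂ)).cexp
  have h2 : HasDerivAt (fun z : ℂ => z ^ (b - 1)) ((b - 1) * (x : ℂ) ^ (b - 1 - 1)) (x : ℂ) := by
    simpa using (hasDerivAt_id (x : ℂ)).cpow_const (c := b - 1) (Complex.ofReal_mem_slitPlane.2 hx)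
  have h := ((h1.mul h2).mul (kF_deriv 1 b x)).comp_ofReal
  refine h.congr_deriv ?_
  have ho := kF_one_ode b x
  have hp : (x : ℂ) ^ (b - 1) = x * (x : ℂ) ^ (b - 2) := by
    rw [show b - 1 = b - 2 + 1 by ring, Complex.cpow_add _ _ hx0, Complex.cpow_one]; ring
  simp only [Pi.mul_apply]
  rw [show b - 1 - 1 = b - 2 by ring, hp]
  linear_combination Complex.exp (-(x : ℂ)) * (x : ℂ) ^ (b - 2) * ho

lemma kH_rec (b : ℂ) (x : ℝ) (hx : 0 < x) :
    kH (b - 1) x = Complex.exp (-(x : ℂ)) * (x : ℂ) ^ (b - 2) * (Complex.Gamma (b - 1))⁻¹ + kH b x := by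
  have hx0 : (x : ℂ) ≠ 0 := by exact_mod_cast hx.ne'
  have hp : (x : ℂ) ^ (b - 1) = x * (x : ℂ) ^ (b - 2) := by
    rw [show b - 1 = b - 2 + 1 by ring, Complex.cpow_add _ _ hx0, Complex.cpow_one]; ring
  unfold kH
  rw [kF_one_rec, show b - 1 - 1 = b - 2 by ring, hp]
  ring

lemma kH_tendsto_of_re (b : ℂ) (hb : 1 < b.re) : Tendsto (kH b) atTop (nhds 1) := by
  have hs : 0 < (b - 1).re := by simpa using hb
  have hcont : Continuous (kH b) := by
    have h1 : Continuous (fun x : ℝ => (x : ℂ) ^ (b - 1)) := Complex.continuous_ofReal_cpow_const hs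
    have h2 : Continuous (kF 1 b) :=
      continuous_iff_continuousAt.2 fun z => (kF_deriv 1 b z).continuousAt
    unfold kH
    fun_prop
  have hG : Complex.Gamma (b - 1) ≠ 0 := Complex.Gamma_ne_zero_of_re_pos hs
  have hlim := (Complex.tendsto_partialGamma hs).mul_const (Complex.Gamma (b - 1))⁻¹
  rw [← Complex.Gamma_eq_integral hs, mul_inv_cancel₀ hG] at hlim
  refine hlim.congr' ?_
  filter_upwards [eventually_ge_atTop 0] with X hX
  have h0 : kH b 0 = 0 := by
    have : b - 1 ≠ 0 := by intro h; rw [h] at hs; simp at hs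
    simp [kH, Complex.zero_cpow this]
  have hint : IntervalIntegrable (fun x : ℝ => ((Real.exp (-x) : ℝ) : ℂ) * (x : ℂ) ^ (b - 1 - 1))
      MeasureTheory.volume 0 X := by
    rw [intervalIntegrable_iff_integrableOn_Ioc_of_le hX]
    exact (Complex.GammaIntegral_convergent hs).mono_set Set.Ioc_subset_Ioi_self
  have := intervalIntegral.integral_eq_sub_of_hasDeriv_right_of_le hX hcont.continuousOn
    (f' := fun x : ℝ => ((Real.exp (-x) : ℝ) : ℂ) * (x : ℂ) ^ (b - 1 - 1) * (Complex.Gamma (b - 1))⁻¹)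
    (fun x hx => ?_) (hint.mul_const _)
  · rw [h0, sub_zero, intervalIntegral.integral_mul_const] at this
    exact this
  · refine ((kH_deriv b x hx.1).congr_deriv ?_).hasDerivWithinAt
    rw [show b - 1 - 1 = b - 2 by ring]
    push_cast
    rfl

lemma kH_norm_term (b c : ℂ) (x : ℝ) (hx : 0 < x) :
    ‖Complex.exp (-(x : ℂ)) * (x : ℂ) ^ b * c‖ = ‖c‖ * (Real.exp (-x) * x ^ b.re) := by
  rw [norm_mul, norm_mul, Complex.norm_cpow_eq_rpow_re_of_pos hx, ← Complex.ofReal_neg,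
    Complex.norm_exp, Complex.ofReal_re]
  ring

lemma kH_tendsto (b : ℂ) : Tendsto (kH b) atTop (nhds 1) := by
  obtain ⟨N, hN⟩ := exists_nat_gt (1 - b.re)
  induction N generalizing b with
  | zero => exact kH_tendsto_of_re b (by simp at hN; linarith)
  | succ N ih =>
    have h1 := ih (b + 1) (by push_cast at hN; simp; linarith)
    have h2 : Tendsto (fun x : ℝ => Complex.exp (-(x : ℂ)) * (x : ℂ) ^ (b - 1) * (Complex.Gamma b)⁻¹)
        atTop (nhds 0) := by
      rw [tendsto_zero_iff_norm_tendsto_zero]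
      have h3 := (tendsto_rpow_mul_exp_neg_mul_atTop_nhds_zero (b - 1).re 1 one_pos).const_mul
        ‖(Complex.Gamma b)⁻¹‖
      rw [mul_zero] at h3
      refine h3.congr' ?_
      filter_upwards [eventually_gt_atTop 0] with x hx
      rw [kH_norm_term _ _ _ hx, neg_one_mul]
      ring
    have h4 := h2.add h1
    rw [zero_add] at h4
    refine h4.congr' ?_
    filter_upwards [eventually_gt_atTop 0] with x hx
    have := kH_rec (b + 1) x hx
    rw [show b + 1 - 1 = b by ring, show b + 1 - 2 = b - 1 by ring] at this
    exact this.symm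

lemma kH_bound (b : ℂ) : ∃ C : ℝ, ∀ᶠ x : ℝ in atTop,
    ‖kH b x - 1‖ ≤ C * (Real.exp (-x) * x ^ (b - 2).re) := by
  set c := ‖(Complex.Gamma (b - 1))⁻¹‖ with hc
  set r := (b - 2).re with hr
  have hc0 : 0 ≤ c := norm_nonneg _
  refine ⟨2 * c, ?_⟩
  filter_upwards [eventually_gt_atTop 0, eventually_ge_atTop (2 * r)] with x hx hxr
  have key : ∀ y : ℝ, x ≤ y → ‖kH b y - kH b x‖ ≤ 2 * c * (Real.exp (-x) * x ^ r) := by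
    intro y hy
    have hB : ∀ t : ℝ, 0 < t → HasDerivAt
        (fun t : ℝ => 2 * c * (Real.exp (-x) * x ^ r) - 2 * c * (Real.exp (-t) * t ^ r))
        (-(2 * c * (-Real.exp (-t) * t ^ r + Real.exp (-t) * (r * t ^ (r - 1))))) t := by
      intro t ht
      have h1 : HasDerivAt (fun t : ℝ => Real.exp (-t)) (-Real.exp (-t)) t := by
        simpa using (hasDerivAt_neg t).exp
      have h2 := Real.hasDerivAt_rpow_const (x := t) (p := r) (Or.inl ht.ne')
      exact ((h1.mul h2).const_mul (2 * c)).const_sub _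
    have h := image_norm_le_of_norm_deriv_right_le_deriv_boundary' (a := x) (b := y)
      (f := fun t => kH b t - kH b x)
      (f' := fun t => Complex.exp (-(t : ℂ)) * (t : ℂ) ^ (b - 2) * (Complex.Gamma (b - 1))⁻¹)
      (B := fun t : ℝ => 2 * c * (Real.exp (-x) * x ^ r) - 2 * c * (Real.exp (-t) * t ^ r))
      (B' := fun t : ℝ => -(2 * c * (-Real.exp (-t) * t ^ r + Real.exp (-t) * (r * t ^ (r - 1)))))
      (fun t ht => ((kH_deriv b t (hx.trans_le ht.1)).sub_const
        _).continuousAt.continuousWithinAt)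
      (fun t ht => ((kH_deriv b t (hx.trans_le ht.1)).sub_const _).hasDerivWithinAt)
      (by simp)
      (fun t ht => (hB t (hx.trans_le ht.1)).continuousAt.continuousWithinAt)
      (fun t ht => (hB t (hx.trans_le ht.1)).hasDerivWithinAt)
      (fun t ht => ?_) (Set.right_mem_Icc.2 hy)
    · refine h.trans ?_
      have : 0 ≤ 2 * c * (Real.exp (-y) * y ^ r) := by
        have := hx.trans_le hy
        positivity
      linarith
    · have ht0 : 0 < t := hx.trans_le ht.1
      have htr : 2 * r ≤ t := hxr.trans ht.1
      rw [kH_norm_term _ _ _ ht0, ← hc, ← hr]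
      have h3 : t ^ r = t ^ (r - 1) * t := by
        rw [← Real.rpow_add_one ht0.ne']; congr 1; ring
      rw [h3]
      have h4 : 0 ≤ c * (Real.exp (-t) * t ^ (r - 1)) := by positivity
      nlinarith
  have hl : Tendsto (fun y => ‖kH b y - kH b x‖) atTop (nhds ‖1 - kH b x‖) :=
    ((kH_tendsto b).sub_const _).norm
  rw [norm_sub_rev]
  refine le_of_tendsto hl ?_
  filter_upwards [eventually_ge_atTop x] with y hy using key y hy

/-- First-order bound in the case `a = 1`. -/
lemma kE_bigO (b : ℂ) :
    (fun x : ℝ => kF 1 b x - (x : ℂ) ^ (1 - b) * Complex.exp x) =O[atTop]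
      fun x : ℝ => x ^ (-1 : ℝ) := by
  obtain ⟨C, hC⟩ := kH_bound b
  refine IsBigO.of_bound C ?_
  filter_upwards [hC, eventually_gt_atTop 0] with x h hx
  have hx0 : (x : ℂ) ≠ 0 := by exact_mod_cast hx.ne'
  have h1 : kF 1 b x - (x : ℂ) ^ (1 - b) * Complex.exp x
      = (x : ℂ) ^ (1 - b) * Complex.exp x * (kH b x - 1) := by
    unfold kH
    have h2 : (x : ℂ) ^ (1 - b) * (x : ℂ) ^ (b - 1) = 1 := by
      rw [← Complex.cpow_add _ _ hx0]; simp
    have h3 : Complex.exp (x : ℂ) * Complex.exp (-(x : ℂ)) = 1 := by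
      rw [← Complex.exp_add]; simp
    linear_combination (-kF 1 b x) * h3 + (-kF 1 b x * Complex.exp (x : ℂ) * Complex.exp (-(x : ℂ))) * h2
  rw [h1, norm_mul, norm_mul, Complex.norm_cpow_eq_rpow_re_of_pos hx, Complex.norm_exp,
    Complex.ofReal_re, Real.norm_of_nonneg (by positivity)]
  calc x ^ (1 - b).re * Real.exp x * ‖kH b x - 1‖
      ≤ x ^ (1 - b).re * Real.exp x * (C * (Real.exp (-x) * x ^ (b - 2).re)) := by gcongr
    _ = C * (x ^ (1 - b).re * x ^ (b - 2).re) * (Real.exp x * Real.exp (-x)) := by ring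
    _ = C * x ^ (-1 : ℝ) := by
      rw [← Real.exp_add, ← Real.rpow_add hx]
      simp
      left
      congr 1
      ring


lemma asc_left (j : ℕ) (a : ℂ) :
    (ascPochhammer ℂ (j + 1)).eval a = a * (ascPochhammer ℂ j).eval (a + 1) := by
  rw [ascPochhammer_succ_left]
  simp [Polynomial.eval_comp]

/-- The terminating exponential part. -/
noncomputable def kX (n : ℕ) (b : ℂ) (x : ℝ) : ℂ :=
  ((x : ℂ) ^ ((n : ℂ) - b) * Complex.exp (x : ℂ) / (n - 1).factorial) *
            ∑ j ∈ Finset.range n,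
              (ascPochhammer ℂ j).eval (b - (n : ℂ)) * (ascPochhammer ℂ j).eval (1 - (n : ℂ)) /
                (j.factorial * (x : ℂ) ^ j)

/-- The truncated algebraic part. -/
noncomputable def kA (n : ℕ) (b : ℂ) (M : ℕ) (x : ℝ) : ℂ :=
  ((-1) ^ n * (x : ℂ) ^ (-(n : ℂ)) / Complex.Gamma (b - n)) *
            ∑ j ∈ Finset.range M,
              (-1) ^ j * (ascPochhammer ℂ j).eval (n : ℂ) *
                (ascPochhammer ℂ j).eval (1 + (n : ℂ) - b) / (j.factorial * (x : ℂ) ^ j)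

lemma kX_one (b : ℂ) (x : ℝ) : kX 1 b x = (x : ℂ) ^ (1 - b) * Complex.exp x := by
  simp [kX]

lemma kX_sum (n : ℕ) (hn : 0 < n) (c y : ℂ) (hy : y ≠ 0) :
    ∑ j ∈ Finset.range (n + 1), (ascPochhammer ℂ j).eval c * (ascPochhammer ℂ j).eval (-(n : ℂ)) /
        (j.factorial * y ^ j)
      = ∑ j ∈ Finset.range n, (ascPochhammer ℂ j).eval c *
          (ascPochhammer ℂ j).eval (1 - (n : ℂ)) / (j.factorial * y ^ j)
        - c * y⁻¹ * ∑ j ∈ Finset.range n, (ascPochhammer ℂ j).eval (c + 1) *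
          (ascPochhammer ℂ j).eval (1 - (n : ℂ)) / (j.factorial * y ^ j) := by
  have hz : (ascPochhammer ℂ n).eval (1 - (n : ℂ)) = 0 := by
    obtain ⟨m, rfl⟩ := Nat.exists_eq_succ_of_ne_zero hn.ne'
    rw [Nat.succ_eq_add_one, ascPochhammer_succ_eval]
    push_cast
    ring
  have he : ∑ j ∈ Finset.range n, (ascPochhammer ℂ j).eval c *
          (ascPochhammer ℂ j).eval (1 - (n : ℂ)) / (j.factorial * y ^ j)
      = ∑ j ∈ Finset.range (n + 1), (ascPochhammer ℂ j).eval c *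
          (ascPochhammer ℂ j).eval (1 - (n : ℂ)) / (j.factorial * y ^ j) := by
    rw [Finset.sum_range_succ, hz]; simp
  rw [he, Finset.sum_range_succ', Finset.sum_range_succ', Finset.mul_sum, add_sub_right_comm,
    ← Finset.sum_sub_distrib]
  congr 1
  · refine Finset.sum_congr rfl fun j _ => ?_
    rw [asc_left j c, asc_left j (-(n : ℂ)), ascPochhammer_succ_eval, Nat.factorial_succ,
      show -(n : ℂ) + 1 = 1 - n by ring]
    have hk : ((j : ℂ) + 1) ≠ 0 := by exact_mod_cast Nat.succ_ne_zero j
    have hk' : ((j.factorial : ℕ) : ℂ) ≠ 0 := by exact_mod_cast j.factorial_ne_zero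
    push_cast
    field_simp
    ring
  · simp

lemma kA_sum (M : ℕ) (a d y : ℂ) (hy : y ≠ 0) :
    ∑ j ∈ Finset.range (M + 1), (-1) ^ j * (ascPochhammer ℂ j).eval a *
        (ascPochhammer ℂ j).eval (d + 1) / (j.factorial * y ^ j)
      - ∑ j ∈ Finset.range (M + 1), (-1) ^ j * (ascPochhammer ℂ j).eval a *
        (ascPochhammer ℂ j).eval d / (j.factorial * y ^ j)
      = - a * y⁻¹ * ∑ j ∈ Finset.range M, (-1) ^ j * (ascPochhammer ℂ j).eval (a + 1) *
        (ascPochhammer ℂ j).eval (d + 1) / (j.factorial * y ^ j) := by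
  rw [← Finset.sum_sub_distrib, Finset.sum_range_succ', Finset.mul_sum]
  simp only [ascPochhammer_zero, Polynomial.eval_one, sub_self, add_zero]
  refine Finset.sum_congr rfl fun j _ => ?_
  rw [asc_left j a, asc_left j d, ascPochhammer_succ_eval, Nat.factorial_succ]
  have hk : ((j : ℂ) + 1) ≠ 0 := by exact_mod_cast Nat.succ_ne_zero j
  have hk' : ((j.factorial : ℕ) : ℂ) ≠ 0 := by exact_mod_cast j.factorial_ne_zero
  push_cast
  field_simp
  ring

lemma kX_contig (n : ℕ) (hn : 0 < n) (b : ℂ) (x : ℝ) (hx : 0 < x) :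
    n * kX (n + 1) b x = (n - b + 1) * kX n b x + kX n (b - 1) x := by
  have hx0 : (x : ℂ) ≠ 0 := by exact_mod_cast hx.ne'
  have hs := kX_sum n hn (b - n - 1) x hx0
  unfold kX
  have hf : ((n + 1 - 1).factorial : ℂ) = n * (n - 1).factorial := by
    rw [Nat.add_sub_cancel]
    exact_mod_cast (Nat.mul_factorial_pred hn.ne').symm
  have hp : (x : ℂ) ^ ((n : ℂ) - b + 1) = x * (x : ℂ) ^ ((n : ℂ) - b) := by
    rw [Complex.cpow_add _ _ hx0, Complex.cpow_one]; ring
  have hn0 : (n : ℂ) ≠ 0 := by exact_mod_cast hn.ne'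
  have hk' : (((n - 1).factorial : ℕ) : ℂ) ≠ 0 := by exact_mod_cast (n - 1).factorial_ne_zero
  rw [hf]
  push_cast
  rw [show (n : ℂ) + 1 - b = n - b + 1 by ring, show (n : ℂ) - (b - 1) = n - b + 1 by ring,
    show b - ((n : ℂ) + 1) = b - n - 1 by ring, show b - 1 - (n : ℂ) = b - n - 1 by ring,
    show 1 - ((n : ℂ) + 1) = -n by ring, hp, hs, show b - n - 1 + 1 = b - (n : ℂ) by ring]
  field_simp
  ring

lemma kA_contig (n : ℕ) (b : ℂ) (M : ℕ) (x : ℝ) (hx : 0 < x) :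
    n * kA (n + 1) b M x = (n - b + 1) * kA n b (M + 1) x + kA n (b - 1) (M + 1) x := by
  have hx0 : (x : ℂ) ≠ 0 := by exact_mod_cast hx.ne'
  have hs := kA_sum M n (1 + n - b) x hx0
  have hG := Complex.one_div_Gamma_eq_self_mul_one_div_Gamma_add_one (b - n - 1)
  rw [show b - n - 1 + 1 = b - (n : ℂ) by ring] at hG
  have hp : (x : ℂ) ^ (-((n : ℂ) + 1)) = (x : ℂ)⁻¹ * (x : ℂ) ^ (-(n : ℂ)) := by
    rw [neg_add, Complex.cpow_add _ _ hx0, Complex.cpow_neg_one]; ring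
  unfold kA
  push_cast
  rw [show 1 + ((n : ℂ) + 1) - b = 1 + n - b + 1 by ring,
    show 1 + (n : ℂ) - (b - 1) = 1 + n - b + 1 by ring,
    show b - ((n : ℂ) + 1) = b - n - 1 by ring, show b - 1 - (n : ℂ) = b - n - 1 by ring, hp]
  simp only [div_eq_mul_inv _ (Complex.Gamma _), hG]
  linear_combination -((-1) ^ n * (x : ℂ) ^ (-(n : ℂ)) * ((b - n - 1) * (Complex.Gamma (b - n))⁻¹)) * hs

lemma kA_one_rec (b : ℂ) (M : ℕ) (x : ℝ) (hx : 0 < x) :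
    kA 1 b (M + 1) x = (x : ℂ)⁻¹ * (kA 1 (b - 1) M x - (Complex.Gamma (b - 1))⁻¹) := by
  have hx0 : (x : ℂ) ≠ 0 := by exact_mod_cast hx.ne'
  have hG := Complex.one_div_Gamma_eq_self_mul_one_div_Gamma_add_one (b - 1 - 1)
  rw [show b - 1 - 1 + 1 = b - 1 by ring] at hG
  unfold kA
  rw [Finset.sum_range_succ']
  push_cast
  simp only [div_eq_mul_inv _ (Complex.Gamma _), hG, Complex.cpow_neg_one, ascPochhammer_eval_one]
  have hs : ∑ j ∈ Finset.range M, (-1) ^ (j + 1) * ((j + 1).factorial : ℂ) *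
        (ascPochhammer ℂ (j + 1)).eval (1 + 1 - b) / ((j + 1).factorial * (x : ℂ) ^ (j + 1))
      = (b - 2) * (x : ℂ)⁻¹ * ∑ j ∈ Finset.range M, (-1) ^ j * (j.factorial : ℂ) *
        (ascPochhammer ℂ j).eval (1 + 1 - (b - 1)) / (j.factorial * (x : ℂ) ^ j) := by
    rw [Finset.mul_sum]
    refine Finset.sum_congr rfl fun j _ => ?_
    rw [asc_left, show 1 + 1 - b + 1 = 1 + 1 - (b - 1) by ring]
    have hk : (((j + 1).factorial : ℕ) : ℂ) ≠ 0 := by exact_mod_cast (j + 1).factorial_ne_zero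
    have hk' : ((j.factorial : ℕ) : ℂ) ≠ 0 := by exact_mod_cast j.factorial_ne_zero
    field_simp
    ring
  rw [hs]
  simp
  ring

lemma k_one (M : ℕ) (b : ℂ) :
    (fun x : ℝ => kF 1 b x - kX 1 b x - kA 1 b M x) =O[atTop] fun x : ℝ => (x ^ (1 + M))⁻¹ := by
  induction M generalizing b with
  | zero =>
    refine (kE_bigO b).congr' ?_ ?_
    · refine Eventually.of_forall fun x => ?_
      simp [kX_one, kA]
    · filter_upwards with x
      simp [Real.rpow_neg_one]
  | succ M ih =>
    have h1 : (fun x : ℝ => ((x : ℂ))⁻¹) =O[atTop] fun x : ℝ => x⁻¹ := by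
      refine IsBigO.of_bound 1 (Eventually.of_forall fun x => ?_)
      simp
    refine (h1.mul (ih (b - 1))).congr' ?_ ?_
    · filter_upwards [eventually_gt_atTop 0] with x hx
      have hx0 : (x : ℂ) ≠ 0 := by exact_mod_cast hx.ne'
      have hp : (x : ℂ) ^ (1 - (b - 1)) = x * (x : ℂ) ^ (1 - b) := by
        rw [show 1 - (b - 1) = 1 - b + 1 by ring, Complex.cpow_add _ _ hx0, Complex.cpow_one]; ring
      rw [kA_one_rec b M x hx, kF_one_rec, kX_one, kX_one, hp]
      field_simp
      ring
    · filter_upwards with x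
      rw [← mul_inv]; congr 1; ring

lemma k_main (n : ℕ) (hn : 1 ≤ n) : ∀ (M : ℕ) (b : ℂ),
    (fun x : ℝ => kF n b x - kX n b x - kA n b M x) =O[atTop] fun x : ℝ => (x ^ (n + M))⁻¹ := by
  induction n, hn using Nat.le_induction with
  | base =>
    intro M b
    simpa using k_one M b
  | succ n hn ih =>
    intro M b
    have h := ((((ih (M + 1) b).const_mul_left (n - b + 1)).add
      (ih (M + 1) (b - 1))).const_mul_left (n : ℂ)⁻¹)
    have hn0 : (n : ℂ) ≠ 0 := by exact_mod_cast (Nat.pos_of_ne_zero (by omega)).ne'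
    refine h.congr' ?_ ?_
    · filter_upwards [eventually_gt_atTop 0] with x hx
      have e1 := kF_contig n b x
      have e2 := kX_contig n hn b x hx
      have e3 := kA_contig n b M x hx
      rw [inv_mul_eq_iff_eq_mul₀ hn0]
      push_cast
      linear_combination e2 + e3 - e1
    · filter_upwards with x
      congr 2; ring


/-- For a positive integer first parameter `a = n`, the exponential expansion of
`₁F₁(n; b; x)` terminates after `n` terms, and the subdominant algebraic expansion on the
Stokes line `arg z = 0` carries the multiplier `(−1)ⁿ = cos(πn)` with no half-integer-power
corrections:
`(1/Γ(b)) ₁F₁(n;b;x) − (x^{n−b} eˣ/(n−1)!) ∑_{j<n} (b−n)_j (1−n)_j/(j! xʲ)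
  − ((−1)ⁿ x^{−n}/Γ(b−n)) ∑_{j<M} (−1)ʲ (n)_j (1+n−b)_j/(j! xʲ) = O(x^{−n−M})`. -/
theorem kummer_positive_integer_a (n : ℕ) (hn : 0 < n) (b : ℂ)
    (hb : ∀ m : ℕ, b ≠ -(m : ℂ)) (hbn : ∀ m : ℕ, b - n ≠ -(m : ℂ)) (M : ℕ) (hM : 0 < M) :
    (fun x : ℝ =>
        (1 / Complex.Gamma b) * kummer (n : ℂ) b (x : ℂ) -
          ((x : ℂ) ^ ((n : ℂ) - b) * Complex.exp (x : ℂ) / (n - 1).factorial) *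
            ∑ j ∈ Finset.range n,
              (ascPochhammer ℂ j).eval (b - (n : ℂ)) * (ascPochhammer ℂ j).eval (1 - (n : ℂ)) /
                (j.factorial * (x : ℂ) ^ j) -
          ((-1) ^ n * (x : ℂ) ^ (-(n : ℂ)) / Complex.Gamma (b - n)) *
            ∑ j ∈ Finset.range M,
              (-1) ^ j * (ascPochhammer ℂ j).eval (n : ℂ) *
                (ascPochhammer ℂ j).eval (1 + (n : ℂ) - b) / (j.factorial * (x : ℂ) ^ j))
      =O[atTop] fun x : ℝ => x ^ (-(n : ℝ) - M) := by
  refine (k_main n hn M b).congr' ?_ ?_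
  · refine Eventually.of_forall fun x => ?_
    simp only [kX, kA, kummer_eq_kF (n : ℂ) b x hb]
  · filter_upwards [eventually_gt_atTop 0] with x hx
    rw [show -(n : ℝ) - M = -((n + M : ℕ) : ℝ) by push_cast; ring, Real.rpow_neg hx.le,
      Real.rpow_natCast]
end

section
/- Let a, b be real numbers with a not an integer, b not a nonpositive integer, and b − a not a nonpositive integer. For x > 0 set m₀(x) := ⌊x + 2a − b⌋. Then as x → +∞, G(x) := (1/Γ(b)) · ₁F₁(b−a; b; −x) − (x^{a−b}/Γ(a)) ∑_{j=0}^{m₀(x)−1} (b−a)_j (1−a)_j / (j! x^j) satisfies G(x) = (x^{−a} e^{−x}/Γ(b−a)) · ( cos(πa) + O(x^{−1/2}) ); that is, after subtracting the optimally truncated dominant algebraic expansion, the exponentially small contribution on the Stokes line arg z = π has Stokes multiplier cos(πa) to leading order. -/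
open Complex Filter Asymptotics
namespace KS

noncomputable def kap (c : ℝ) (k : ℕ) : ℝ := (ascPochhammer ℝ k).eval c / k.factorial

lemma kap_zero (c : ℝ) : kap c 0 = 1 := by simp [kap]

lemma kap_succ (c : ℝ) (k : ℕ) : kap c (k+1) = kap c k * ((c + k) / (k + 1)) := by
  unfold kap
  rw [ascPochhammer_succ_eval, Nat.factorial_succ]
  push_cast
  have : (k.factorial : ℝ) ≠ 0 := by positivity
  have h2 : (k : ℝ) + 1 ≠ 0 := by positivity
  field_simp

lemma kap_succ' (c : ℝ) (k : ℕ) : ((k:ℝ)+1) * kap c (k+1) = (c + k) * kap c k := by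
  rw [kap_succ]
  have h2 : (k : ℝ) + 1 ≠ 0 := by positivity
  field_simp

lemma kap_shift (c : ℝ) (k : ℕ) : c * kap (c+1) k = (c + k) * kap c k := by
  induction k with
  | zero => simp [kap_zero]
  | succ k ih =>
    rw [kap_succ, kap_succ, ← mul_assoc, ih]
    push_cast
    ring

lemma kap_sub (c : ℝ) (hc : c ≠ 0) (k : ℕ) : kap c (k+1) = kap (c+1) (k+1) - kap (c+1) k := by
  have h1 := kap_shift c (k+1)
  have h2 := kap_shift c k
  have h3 := kap_succ' c k
  push_cast at h1
  apply mul_left_cancel₀ hc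
  linear_combination h2 - h1 - h3

lemma kap_bound (c : ℝ) (hc : c < 1) : ∃ C : ℝ, 0 < C ∧ ∀ k : ℕ, |kap c k| ≤ C * ((k:ℝ)+1)^(c-1) := by
  obtain ⟨N, hN⟩ := exists_nat_ge (-c)
  set v : ℕ → ℝ := fun k => |kap c k| * ((k:ℝ)+1)^(1-c) with hv
  have hdec : ∀ k, N ≤ k → v (k+1) ≤ v k := by
    intro k hk
    have hk' : (N:ℝ) ≤ k := by exact_mod_cast hk
    have hk0 : (0:ℝ) < k + 1 := by positivity
    simp only [hv]
    rw [kap_succ, abs_mul, mul_assoc]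
    apply mul_le_mul_of_nonneg_left _ (abs_nonneg _)
    have h1 : |(c + k) / ((k:ℝ)+1)| = 1 - (1-c)/(k+1) := by
      rw [abs_of_nonneg (div_nonneg (by linarith) hk0.le)]
      field_simp
      ring
    rw [h1]
    have h2 : 1 - (1-c)/((k:ℝ)+1) ≤ Real.exp (-((1-c)/(k+1))) := by
      have := Real.add_one_le_exp (-((1-c)/((k:ℝ)+1)))
      linarith
    have h3 : ((((k+1:ℕ):ℝ))+1)^(1-c) ≤ ((k:ℝ)+1)^(1-c) * Real.exp ((1-c)/(k+1)) := by
      have e1 : (((k+1:ℕ):ℝ))+1 = (k+1) * (1 + 1/((k:ℝ)+1)) := by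
        push_cast; field_simp
      rw [e1, Real.mul_rpow hk0.le (by positivity)]
      apply mul_le_mul_of_nonneg_left _ (by positivity)
      have : 1 + 1/((k:ℝ)+1) ≤ Real.exp (1/((k:ℝ)+1)) := by
        have := Real.add_one_le_exp (1/((k:ℝ)+1)); linarith
      calc (1 + 1/((k:ℝ)+1))^(1-c) ≤ (Real.exp (1/((k:ℝ)+1)))^(1-c) :=
            Real.rpow_le_rpow (by positivity) this (by linarith)
        _ = _ := by rw [← Real.exp_mul]; congr 1; ring
    calc _ ≤ Real.exp (-((1-c)/(k+1))) * (((k:ℝ)+1)^(1-c) * Real.exp ((1-c)/(k+1))) := by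
          apply mul_le_mul h2 h3 (by positivity) (by positivity)
      _ = _ := by
          rw [Real.exp_neg]; field_simp
  have hb : ∀ k, v k ≤ (∑ j ∈ Finset.range (N+1), v j) := by
    intro k
    have hnn : ∀ j, 0 ≤ v j := fun j => by simp only [hv]; positivity
    by_cases h : k < N + 1
    · exact Finset.single_le_sum (fun j _ => hnn j) (Finset.mem_range.mpr h)
    · have hk : N ≤ k := by omega
      have h1 : v k ≤ v N := by
        induction k, hk using Nat.le_induction with
        | base => exact le_rfl
        | succ k hk ih =>
          by_cases h' : k < N + 1
          · have : k = N := by omega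
            subst this; exact hdec k le_rfl
          · exact (hdec k hk).trans (ih h')
      exact h1.trans (Finset.single_le_sum (fun j _ => hnn j) (Finset.mem_range.mpr (by omega)))
  refine ⟨(∑ j ∈ Finset.range (N+1), v j) + 1, ?_, ?_⟩
  · have : 0 ≤ v 0 := by simp only [hv]; positivity
    have := hb 0; linarith
  · intro k
    have h1 := hb k
    have hk0 : (0:ℝ) < (k:ℝ) + 1 := by positivity
    have : |kap c k| = v k * ((k:ℝ)+1)^(c-1) := by
      simp only [hv]
      rw [mul_assoc, ← Real.rpow_add hk0]; simp
    rw [this]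
    apply mul_le_mul_of_nonneg_right (by linarith) (by positivity)

lemma kap_diff (c : ℝ) (hc : c < 1) : ∃ C : ℝ, 0 < C ∧ ∀ k : ℕ,
    |kap c (k+1) - kap c k| ≤ C * ((k:ℝ)+1)^(c-2) := by
  obtain ⟨C, hC, h⟩ := kap_bound c hc
  refine ⟨C * (1-c), by nlinarith, fun k => ?_⟩
  have hk0 : (0:ℝ) < (k:ℝ) + 1 := by positivity
  have e : kap c (k+1) - kap c k = kap c k * (-(1-c)/(k+1)) := by
    rw [kap_succ]; field_simp; ring
  rw [e, abs_mul, abs_div, abs_neg, abs_of_pos hk0, abs_of_pos (by linarith : 0 < 1 - c)]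
  have e2 : ((k:ℝ)+1)^(c-2) = ((k:ℝ)+1)^(c-1) / (k+1) := by
    rw [← Real.rpow_sub_one hk0.ne']; congr 1; ring
  rw [e2]
  calc _ ≤ C * ((k:ℝ)+1)^(c-1) * ((1-c)/(k+1)) :=
        mul_le_mul_of_nonneg_right (h k) (div_nonneg (by linarith) hk0.le)
    _ = _ := by ring

lemma kap_summable (c : ℝ) (hc : c < 1) : Summable fun k : ℕ => |kap c k| / ((k:ℝ)+1) := by
  obtain ⟨C, hC, h⟩ := kap_bound c hc
  have hs : Summable fun k : ℕ => C * ((k:ℝ)+1)^(c-2) := by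
    apply Summable.mul_left
    have := (summable_nat_add_iff 1 (f := fun k : ℕ => (k:ℝ)^(c-2))).mpr
      (Real.summable_nat_rpow.mpr (by linarith))
    simpa using this
  refine Summable.of_nonneg_of_le (fun k => by positivity) (fun k => ?_) hs
  have hk0 : (0:ℝ) < (k:ℝ) + 1 := by positivity
  have e2 : ((k:ℝ)+1)^(c-2) = ((k:ℝ)+1)^(c-1) / (k+1) := by
    rw [← Real.rpow_sub_one hk0.ne']; congr 1; ring
  rw [e2, ← mul_div_assoc]
  exact div_le_div_of_nonneg_right (h k) hk0.le

lemma kap_tendsto (c : ℝ) (hc : c < 1) : Tendsto (fun k => kap c k) atTop (nhds 0) := by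
  obtain ⟨C, hC, h⟩ := kap_bound c hc
  apply squeeze_zero_norm (a := fun k : ℕ => C * ((k:ℝ)+1)^(c-1)) (fun k => by
    rw [Real.norm_eq_abs]; exact h k)
  have h1 : Tendsto (fun k : ℕ => (k:ℝ)+1) atTop atTop :=
    tendsto_atTop_add_const_right _ _ tendsto_natCast_atTop_atTop
  have := ((tendsto_rpow_neg_atTop (by linarith : 0 < 1 - c)).comp h1).const_mul C
  simpa [Function.comp_def] using this

/-- lower bound for distances to nonpositive integers -/
lemma inv_bound (s : ℝ) (hs : ∀ n : ℕ, s ≠ -(n:ℝ)) :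
    ∃ C : ℝ, 0 < C ∧ ∀ k : ℕ, |1 / (s + k)| ≤ C / ((k:ℝ)+1) := by
  have ht : Tendsto (fun k : ℕ => ((k:ℝ)+1) / (s + k)) atTop (nhds 1) := by
    have h1 : Tendsto (fun k : ℕ => (1 + (1 - s) / (s + k))) atTop (nhds (1 + 0)) := by
      apply Tendsto.const_add
      apply Tendsto.const_div_atTop
      exact tendsto_atTop_add_const_left _ _ tendsto_natCast_atTop_atTop
    rw [add_zero] at h1
    refine h1.congr (fun k => ?_)
    have : s + k ≠ 0 := fun h => hs k (by linarith)
    field_simp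
    ring
  obtain ⟨C, hC⟩ := ht.abs.bddAbove_range
  refine ⟨max C 1, by positivity, fun k => ?_⟩
  have h1 : |((k:ℝ)+1) / (s + k)| ≤ C := hC ⟨k, rfl⟩
  have hk0 : (0:ℝ) < (k:ℝ) + 1 := by positivity
  rw [le_div_iff₀ hk0]
  calc |1/(s+k)| * ((k:ℝ)+1) = |((k:ℝ)+1) / (s + k)| := by
        rw [abs_div, abs_div, abs_of_pos hk0]; simp; ring
    _ ≤ _ := h1.trans (le_max_left _ _)

lemma f_summable_abs (c s : ℝ) (hc : c < 1) (hs : ∀ n : ℕ, s ≠ -(n:ℝ)) :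
    Summable fun k : ℕ => |kap c k / (s + k)| := by
  obtain ⟨C, hC, h⟩ := inv_bound s hs
  refine Summable.of_nonneg_of_le (fun k => by positivity) (fun k => ?_) ((kap_summable c hc).mul_left C)
  calc _ = |kap c k| * |1/(s+k)| := by rw [← abs_mul]; congr 1; ring
    _ ≤ |kap c k| * (C / ((k:ℝ)+1)) := mul_le_mul_of_nonneg_left (h k) (abs_nonneg _)
    _ = _ := by ring

lemma f_summable (c s : ℝ) (hc : c < 1) (hs : ∀ n : ℕ, s ≠ -(n:ℝ)) :
    Summable fun k : ℕ => kap c k / (s + k) := (f_summable_abs c s hc hs).of_abs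

noncomputable def f (c s : ℝ) : ℝ := ∑' k : ℕ, kap c k / (s + k)

lemma shift_ne {s : ℝ} (hs : ∀ n : ℕ, s ≠ -(n:ℝ)) (j : ℕ) : ∀ n : ℕ, s + j ≠ -(n:ℝ) := by
  intro n h
  apply hs (n + j)
  push_cast; linarith

lemma f_rec (c s : ℝ) (hc : c < 1) (hs : ∀ n : ℕ, s ≠ -(n:ℝ)) :
    (s + 1 - c) * f c (s+1) = s * f c s := by
  have hs1 : ∀ n : ℕ, s + 1 ≠ -(n:ℝ) := by simpa using shift_ne hs 1
  have h0 := ((f_summable c s hc hs).hasSum.mul_left s)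
  have h1 := ((f_summable c (s+1) hc hs1).hasSum.mul_left (s+1-c))
  have h2 := (h1.sub h0).tendsto_sum_nat
  have h3 : Tendsto (fun n => ∑ k ∈ Finset.range n, ((s+1-c) * (kap c k / (s+1+k)) - s * (kap c k/(s+k))))
      atTop (nhds 0) := by
    have e : ∀ n, ∑ k ∈ Finset.range n, ((s+1-c) * (kap c k / (s+1+k)) - s * (kap c k/(s+k)))
        = - (n * kap c n / (s + n)) := by
      intro n
      induction n with
      | zero => simp
      | succ n ih =>
        rw [Finset.sum_range_succ, ih]
        have a1 : s + n ≠ 0 := fun h => hs n (by linarith)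
        have a2 : s + 1 + n ≠ 0 := fun h => hs1 n (by linarith)
        have a3 : s + ((n:ℝ) + 1) ≠ 0 := by rwa [← add_assoc, add_right_comm]
        have := kap_succ' c n
        push_cast
        rw [this]
        field_simp
        ring
    simp_rw [e]
    obtain ⟨C, hC, h⟩ := inv_bound s hs
    rw [← neg_zero]
    apply Tendsto.neg
    have hk := ((kap_tendsto c hc).abs.const_mul C)
    simp only [abs_zero, mul_zero] at hk
    apply squeeze_zero_norm _ hk
    intro n
    have hk0 : (0:ℝ) < (n:ℝ) + 1 := by positivity
    rw [Real.norm_eq_abs]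
    calc |n * kap c n / (s+n)| = n * |kap c n| * |1/(s+n)| := by
          rw [mul_div_assoc, abs_mul, div_eq_mul_one_div, abs_mul, Nat.abs_cast]; ring
      _ ≤ ((n:ℝ)+1) * |kap c n| * (C/(n+1)) := by
          apply mul_le_mul _ (h n) (abs_nonneg _) (by positivity)
          apply mul_le_mul_of_nonneg_right (by linarith) (abs_nonneg _)
      _ = _ := by field_simp
  have h4 := tendsto_nhds_unique h2 h3
  have : f c (s+1) = ∑' (b : ℕ), kap c b / (s + 1 + ↑b) := rfl
  have : f c (s) = ∑' (b : ℕ), kap c b / (s + ↑b) := rfl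
  unfold f
  linarith
end KS

namespace KS
open MeasureTheory

lemma kap_hasSum (c t : ℝ) (h0 : 0 < t) (h1 : t < 1) :
    HasSum (fun k : ℕ => kap c k * t^k) ((1-t)^(-c)) := by
  have h := (Real.one_div_one_sub_rpow_hasFPowerSeriesOnBall_zero c).hasSum (y := t) (by
    simp only [Metric.mem_eball, edist_zero_right]
    rw [Real.enorm_of_nonneg h0.le]
    exact ENNReal.ofReal_lt_one.mpr h1)
  simp only [zero_add] at h
  have e : 1 / (1-t)^c = (1-t)^(-c) := by
    rw [Real.rpow_neg (by linarith), one_div]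
  rw [e] at h
  refine h.congr_fun ?_
  intro k
  simp
  rw [mul_comm]
  congr 1
  rw [← Ring.multichoose_eq, kap, div_eq_iff (by positivity), mul_comm]
  have := Ring.factorial_nsmul_multichoose_eq_ascPochhammer c k
  rw [nsmul_eq_mul] at this
  rw [this, Polynomial.ascPochhammer_smeval_eq_eval]

lemma beta_real (u v : ℝ) (hu : 0 < u) (hv : 0 < v) :
    ∫ t in Set.Ioo (0:ℝ) 1, t^(u-1) * (1-t)^(v-1) = Real.Gamma u * Real.Gamma v / Real.Gamma (u+v) := by
  have h := Complex.betaIntegral_eq_Gamma_mul_div (u:ℂ) (v:ℂ) (by simpa) (by simpa)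
  rw [← Complex.ofReal_add, Complex.Gamma_ofReal, Complex.Gamma_ofReal, Complex.Gamma_ofReal] at h
  rw [Complex.betaIntegral, intervalIntegral.integral_of_le zero_le_one,
    integral_Ioc_eq_integral_Ioo] at h
  have e : ∫ t in Set.Ioo (0:ℝ) 1, (t:ℂ)^((u:ℂ)-1) * (1-(t:ℂ))^((v:ℂ)-1)
      = ∫ t in Set.Ioo (0:ℝ) 1, ((t^(u-1) * (1-t)^(v-1) : ℝ) : ℂ) := by
    apply setIntegral_congr_fun measurableSet_Ioo
    intro t ht
    have h1 : (0:ℝ) ≤ t := ht.1.le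
    have h2 : (0:ℝ) ≤ 1 - t := by linarith [ht.2]
    simp only
    push_cast [Complex.ofReal_cpow h1, Complex.ofReal_cpow h2]
    rfl
  rw [e, integral_complex_ofReal] at h
  exact_mod_cast h

lemma integrable_rpow (r : ℝ) (hr : -1 < r) : IntegrableOn (fun t : ℝ => t^r) (Set.Ioo (0:ℝ) 1) :=
  (intervalIntegral.integrableOn_Ioo_rpow_iff (by norm_num)).mpr hr

lemma integral_rpow' (r : ℝ) (hr : -1 < r) : ∫ t in Set.Ioo (0:ℝ) 1, t^r = 1 / (r+1) := by
  rw [← integral_Ioc_eq_integral_Ioo, ← intervalIntegral.integral_of_le zero_le_one,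
    integral_rpow (Or.inl hr)]
  have : r + 1 ≠ 0 := by linarith
  simp [Real.zero_rpow this]

lemma f_pos (c s : ℝ) (hc : c < 1) (hs : 0 < s) :
    f c s = Real.Gamma s * Real.Gamma (1-c) / Real.Gamma (s+1-c) := by
  have hsn : ∀ n : ℕ, s ≠ -(n:ℝ) := fun n h => by
    have : (0:ℝ) ≤ n := by positivity
    linarith
  have hI : ∀ k : ℕ, IntegrableOn (fun t : ℝ => kap c k * t^(s-1+k)) (Set.Ioo (0:ℝ) 1) := by
    intro k
    apply Integrable.const_mul
    exact integrable_rpow _ (by have : (0:ℝ) ≤ k := by positivity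
                                linarith)
  have key := hasSum_integral_of_summable_integral_norm hI ?_
  · have e1 : ∀ k : ℕ, ∫ t in Set.Ioo (0:ℝ) 1, kap c k * t^(s-1+k) = kap c k / (s+k) := by
      intro k
      have : (0:ℝ) ≤ k := by positivity
      rw [integral_const_mul, integral_rpow' _ (by linarith)]
      rw [mul_one_div]; congr 1; ring
    have e2 : ∫ t in Set.Ioo (0:ℝ) 1, (∑' k : ℕ, kap c k * t^(s-1+k)) =
        ∫ t in Set.Ioo (0:ℝ) 1, t^(s-1) * (1-t)^((1-c)-1) := by
      apply setIntegral_congr_fun measurableSet_Ioo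
      intro t ht
      simp only
      have := (kap_hasSum c t ht.1 ht.2).mul_left (t^(s-1))
      rw [show 1 - c - 1 = -c by ring, ← this.tsum_eq]
      congr 1; ext k
      rw [Real.rpow_add ht.1, Real.rpow_natCast]; ring
    rw [e2, beta_real s (1-c) hs (by linarith)] at key
    simp only [e1] at key
    rw [f, key.tsum_eq]
    congr 2; ring
  · have := f_summable_abs c s hc hsn
    refine this.congr (fun k => ?_)
    have hk : (0:ℝ) ≤ k := by positivity
    have e3 : ∫ t in Set.Ioo (0:ℝ) 1, ‖kap c k * t^(s-1+k)‖ = ∫ t in Set.Ioo (0:ℝ) 1, |kap c k| * t^(s-1+k) := by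
      apply setIntegral_congr_fun measurableSet_Ioo
      intro t ht
      simp only [norm_mul, Real.norm_eq_abs]
      rw [abs_of_nonneg (Real.rpow_nonneg ht.1.le _)]
    rw [e3, integral_const_mul, integral_rpow' _ (by linarith), mul_one_div, abs_div,
      abs_of_pos (show 0 < s + k by linarith)]
    congr 1; ring

lemma f_eq_aux (c : ℝ) (hc : c < 1) (n : ℕ) : ∀ s : ℝ, (∀ n : ℕ, s ≠ -(n:ℝ)) →
    0 < s + n → f c s = Real.Gamma s * Real.Gamma (1-c) / Real.Gamma (s+1-c) := by
  induction n with
  | zero => intro s hs h; exact f_pos c s hc (by simpa using h)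
  | succ n ih =>
    intro s hs h
    have hs1 : ∀ n : ℕ, s + 1 ≠ -(n:ℝ) := by simpa using shift_ne hs 1
    have h1 := ih (s+1) hs1 (by push_cast at h; linarith)
    have hr := f_rec c s hc hs
    have hs0 : s ≠ 0 := by simpa using hs 0
    rw [h1, Real.Gamma_add_one hs0] at hr
    apply mul_left_cancel₀ hs0
    rw [← hr]
    by_cases hz : s + 1 - c = 0
    · rw [hz]; simp
    · rw [show s + 1 + 1 - c = (s + 1 - c) + 1 by ring, Real.Gamma_add_one hz]
      by_cases hg : Real.Gamma (s+1-c) = 0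
      · rw [hg]; simp
      · field_simp

lemma f_eq (c s : ℝ) (hc : c < 1) (hs : ∀ n : ℕ, s ≠ -(n:ℝ)) :
    f c s = Real.Gamma s * Real.Gamma (1-c) / Real.Gamma (s+1-c) := by
  obtain ⟨n, hn⟩ := exists_nat_gt (-s)
  exact f_eq_aux c hc n s hs (by linarith)
end KS

namespace KS
open MeasureTheory

noncomputable def P (x s : ℝ) : ℝ := ∫ t in Set.Ioo (0:ℝ) 1, t^(s-1) * Real.exp (x*(1-t))
noncomputable def Q (x s : ℝ) : ℝ := ∫ t in Set.Ioo (0:ℝ) 1, t^(-s-1) * Real.exp (x*(1-1/t))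
noncomputable def g (x s : ℝ) : ℝ := ∑' n : ℕ, (-x)^n / n.factorial / (s + n)

lemma g_summable_abs (x s : ℝ) (hs : ∀ n : ℕ, s ≠ -(n:ℝ)) :
    Summable fun n : ℕ => |(-x)^n / n.factorial / (s + n)| := by
  obtain ⟨C, hC, h⟩ := inv_bound s hs
  refine Summable.of_nonneg_of_le (fun k => by positivity) (fun k => ?_)
    ((Real.summable_pow_div_factorial |x|).mul_left C)
  calc _ = |x|^k / k.factorial * |1/(s+k)| := by
        rw [div_eq_mul_one_div _ (s+k), abs_mul, abs_div, abs_pow, abs_neg, Nat.abs_cast]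
    _ ≤ |x|^k / k.factorial * C := by
        apply mul_le_mul_of_nonneg_left ((h k).trans _) (by positivity)
        apply div_le_self hC.le
        have : (0:ℝ) ≤ k := by positivity
        linarith
    _ = _ := by ring

lemma g_rec (x s : ℝ) (hs : ∀ n : ℕ, s ≠ -(n:ℝ)) :
    s * g x s = Real.exp (-x) + x * g x (s+1) := by
  have hs1 : ∀ n : ℕ, s + 1 ≠ -(n:ℝ) := by simpa using shift_ne hs 1
  have h0 := (g_summable_abs x s hs).of_abs.hasSum.mul_left s
  have h1 := (g_summable_abs x (s+1) hs1).of_abs.hasSum.mul_left x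
  have he : HasSum (fun n : ℕ => (-x)^n / n.factorial) (Real.exp (-x)) := by
    rw [Real.exp_eq_exp_ℝ]
    exact NormedSpace.expSeries_div_hasSum_exp (-x)
  have h2 := he.sub h0
  have h3 : HasSum (fun n : ℕ => (-x)^n / n.factorial - s * ((-x)^n / n.factorial / (s + n)))
      (-(x * g x (s+1))) := by
    rw [← hasSum_nat_add_iff' 1]
    have z : ∑ i ∈ Finset.range 1, ((-x)^i / i.factorial - s * ((-x)^i / i.factorial / (s + i))) = 0 := by
      have : s ≠ 0 := by simpa using hs 0
      simp [this]
    rw [z, sub_zero]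
    refine (h1.neg).congr_fun ?_
    intro n
    have a2 : s + 1 + n ≠ 0 := fun h => hs1 n (by linarith)
    have a3 : s + ((n:ℝ) + 1) ≠ 0 := by rwa [← add_assoc, add_right_comm]
    have a4 : (n.factorial : ℝ) ≠ 0 := by positivity
    rw [Nat.factorial_succ]
    push_cast
    field_simp
    ring
  have := h2.unique h3
  unfold g at *
  linarith

lemma P_integrable (x s : ℝ) (hs : 0 < s) :
    IntegrableOn (fun t : ℝ => t^(s-1) * Real.exp (x*(1-t))) (Set.Ioo 0 1) := by
  apply Integrable.mul_bdd (c := Real.exp |x|) (integrable_rpow (s-1) (by linarith))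
  · exact (Continuous.aestronglyMeasurable (by fun_prop))
  · rw [ae_restrict_iff' measurableSet_Ioo]
    refine ae_of_all _ (fun t ht => ?_)
    rw [Real.norm_eq_abs, abs_of_pos (Real.exp_pos _)]
    apply Real.exp_le_exp.mpr
    have h1 : 0 ≤ 1 - t := by linarith [ht.2]
    have h2 : 1 - t ≤ 1 := by linarith [ht.1]
    have := le_abs_self x
    have := abs_nonneg x
    nlinarith

lemma P_eq (x s : ℝ) (hs : 0 < s) : P x s = Real.exp x * g x s := by
  have hsn : ∀ n : ℕ, s ≠ -(n:ℝ) := fun n h => by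
    have : (0:ℝ) ≤ n := by positivity
    linarith
  have hI : ∀ k : ℕ, IntegrableOn (fun t : ℝ => (-x)^k/k.factorial * t^(s-1+k)) (Set.Ioo (0:ℝ) 1) := by
    intro k
    apply Integrable.const_mul
    exact integrable_rpow _ (by have : (0:ℝ) ≤ k := by positivity
                                linarith)
  have key := hasSum_integral_of_summable_integral_norm hI ?_
  · have e1 : ∀ k : ℕ, ∫ t in Set.Ioo (0:ℝ) 1, (-x)^k/k.factorial * t^(s-1+k) =
        (-x)^k/k.factorial / (s+k) := by
      intro k
      have : (0:ℝ) ≤ k := by positivity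
      rw [integral_const_mul, integral_rpow' _ (by linarith)]
      rw [mul_one_div]; congr 1; ring
    have e2 : ∫ t in Set.Ioo (0:ℝ) 1, (∑' k : ℕ, (-x)^k/k.factorial * t^(s-1+k)) =
        ∫ t in Set.Ioo (0:ℝ) 1, Real.exp (-x) * (t^(s-1) * Real.exp (x*(1-t))) := by
      apply setIntegral_congr_fun measurableSet_Ioo
      intro t ht
      simp only
      have he : HasSum (fun n : ℕ => (-x*t)^n / n.factorial) (Real.exp (-x*t)) := by
        rw [Real.exp_eq_exp_ℝ]
        exact NormedSpace.expSeries_div_hasSum_exp (-x*t)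
      have e3 : Real.exp (-x) * (t^(s-1) * Real.exp (x*(1-t))) = t^(s-1) * Real.exp (-x*t) := by
        rw [mul_left_comm, ← Real.exp_add]; congr 2; ring
      have := he.mul_left (t^(s-1))
      rw [e3, ← this.tsum_eq]
      congr 1; ext k
      rw [Real.rpow_add ht.1, Real.rpow_natCast, mul_pow]; ring
    rw [e2, integral_const_mul] at key
    simp only [e1] at key
    rw [g, key.tsum_eq, P, ← mul_assoc, ← Real.exp_add]
    simp
  · have := g_summable_abs x s hsn
    refine this.congr (fun k => ?_)
    have hk : (0:ℝ) ≤ k := by positivity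
    have e3 : ∫ t in Set.Ioo (0:ℝ) 1, ‖(-x)^k/k.factorial * t^(s-1+k)‖ =
        ∫ t in Set.Ioo (0:ℝ) 1, |(-x)^k/k.factorial| * t^(s-1+k) := by
      apply setIntegral_congr_fun measurableSet_Ioo
      intro t ht
      simp only [norm_mul, Real.norm_eq_abs]
      rw [abs_of_nonneg (Real.rpow_nonneg ht.1.le _)]
    rw [e3, integral_const_mul, integral_rpow' _ (by linarith), mul_one_div, abs_div,
      abs_of_pos (show 0 < s + k by linarith)]
    congr 1; ring

lemma q_bound (x r : ℝ) (hx : 0 < x) : ∃ C : ℝ, 0 < C ∧ ∀ t ∈ Set.Ioo (0:ℝ) 1,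
    t^r * Real.exp (x*(1-1/t)) ≤ C := by
  obtain ⟨n, hn⟩ := exists_nat_ge (-r)
  refine ⟨Real.exp x * (n.factorial / x^n), by positivity, fun t ht => ?_⟩
  have ht0 := ht.1
  have h1 : t^r ≤ (1/t)^n := by
    rw [one_div, inv_pow, ← Real.rpow_natCast, ← Real.rpow_neg ht0.le]
    exact Real.rpow_le_rpow_of_exponent_ge ht0 ht.2.le (by linarith)
  have h2 := Real.pow_div_factorial_le_exp (x * (1/t)) (by positivity) n
  rw [mul_pow, div_le_iff₀ (by positivity)] at h2
  have h3 : (1/t)^n ≤ n.factorial / x^n * Real.exp (x*(1/t)) := by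
    rw [div_mul_eq_mul_div, le_div_iff₀ (by positivity)]
    linarith
  calc t^r * Real.exp (x*(1-1/t)) ≤ (n.factorial / x^n * Real.exp (x*(1/t))) * Real.exp (x*(1-1/t)) :=
        mul_le_mul_of_nonneg_right (h1.trans h3) (by positivity)
    _ = n.factorial / x^n * (Real.exp (x*(1/t)) * Real.exp (x*(1-1/t))) := by ring
    _ = _ := by rw [← Real.exp_add, mul_comm]; congr 2; ring

lemma q_contOn (x r : ℝ) : ContinuousOn (fun t : ℝ => t^r * Real.exp (x*(1-1/t))) (Set.Ioo 0 1) := by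
  apply ContinuousOn.mul
  · apply ContinuousOn.rpow_const continuousOn_id
    intro t ht; left; exact ht.1.ne'
  · apply ContinuousOn.rexp
    apply ContinuousOn.mul continuousOn_const
    apply ContinuousOn.sub continuousOn_const
    apply ContinuousOn.div continuousOn_const continuousOn_id
    intro t ht; exact ht.1.ne'

lemma q_integrable (x r : ℝ) (hx : 0 < x) :
    IntegrableOn (fun t : ℝ => t^r * Real.exp (x*(1-1/t))) (Set.Ioo 0 1) := by
  obtain ⟨C, hC, h⟩ := q_bound x r hx
  refine IntegrableOn.of_bound (by simp)
    ((q_contOn x r).aestronglyMeasurable measurableSet_Ioo) C ?_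
  rw [ae_restrict_iff' measurableSet_Ioo]
  refine ae_of_all _ (fun t ht => ?_)
  rw [Real.norm_eq_abs, abs_of_nonneg (mul_nonneg (Real.rpow_nonneg ht.1.le _) (Real.exp_pos _).le)]
  exact h t ht

lemma Q_rec (x s : ℝ) (hx : 0 < x) : s * Q x s = -1 + x * Q x (s+1) := by
  have hd : ∀ t ∈ Set.Ioo (0:ℝ) 1, HasDerivAt (fun t : ℝ => t^(-s) * Real.exp (x*(1-1/t)))
      (-s * (t^(-s-1) * Real.exp (x*(1-1/t))) + x * (t^(-(s+1)-1) * Real.exp (x*(1-1/t)))) t := by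
    intro t ht
    have ht0 := ht.1
    have h1 := Real.hasDerivAt_rpow_const (x := t) (p := -s) (Or.inl ht0.ne')
    have h2 : HasDerivAt (fun t : ℝ => x*(1-1/t)) (x * (1/t^2)) t := by
      apply HasDerivAt.const_mul
      have := (hasDerivAt_inv ht0.ne').const_sub 1
      simpa using this
    have h3 := h1.mul h2.exp
    refine h3.congr_deriv ?_
    have e : t^(-(s+1)-1) = t^(-s) * (1/t^2) := by
      rw [show -(s+1)-1 = -s - 2 by ring, Real.rpow_sub ht0]
      norm_num
      rfl
    rw [e]; ring
  have hi1 := q_integrable x (-s-1) hx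
  have hi2 := q_integrable x (-(s+1)-1) hx
  have hIntg : IntervalIntegrable (fun t => -s * (t^(-s-1) * Real.exp (x*(1-1/t))) +
      x * (t^(-(s+1)-1) * Real.exp (x*(1-1/t)))) volume 0 1 := by
    rw [intervalIntegrable_iff_integrableOn_Ioo_of_le zero_le_one]
    exact (hi1.const_mul _).add (hi2.const_mul _)
  have h0 : Tendsto (fun t : ℝ => t^(-s) * Real.exp (x*(1-1/t))) (nhdsWithin 0 (Set.Ioi 0)) (nhds 0) := by
    obtain ⟨C, hC, h⟩ := q_bound x (-s-1) hx
    have hl : Tendsto (fun t : ℝ => t * C) (nhdsWithin 0 (Set.Ioi 0)) (nhds 0) := by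
      have : Tendsto (fun t : ℝ => t * C) (nhds 0) (nhds (0*C)) := by
        apply Continuous.tendsto; fun_prop
      rw [zero_mul] at this
      exact this.mono_left nhdsWithin_le_nhds
    have hmem : Set.Ioo (0:ℝ) 1 ∈ nhdsWithin (0:ℝ) (Set.Ioi 0) := Ioo_mem_nhdsGT zero_lt_one
    refine tendsto_of_tendsto_of_tendsto_of_le_of_le' tendsto_const_nhds hl ?_ ?_
    · filter_upwards [hmem] with t ht
      exact mul_nonneg (Real.rpow_nonneg ht.1.le _) (Real.exp_pos _).le
    · filter_upwards [hmem] with t ht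
      calc _ = t * (t^(-s-1) * Real.exp (x*(1-1/t))) := by
            rw [Real.rpow_sub_one ht.1.ne']
            have := ht.1.ne'
            field_simp
        _ ≤ _ := mul_le_mul_of_nonneg_left (h t ht) ht.1.le
  have h1 : Tendsto (fun t : ℝ => t^(-s) * Real.exp (x*(1-1/t))) (nhdsWithin 1 (Set.Iio 1)) (nhds 1) := by
    have : ContinuousAt (fun t : ℝ => t^(-s) * Real.exp (x*(1-1/t))) 1 := by
      apply ContinuousAt.mul
      · exact Real.continuousAt_rpow_const _ _ (Or.inl one_ne_zero)
      · apply ContinuousAt.rexp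
        apply ContinuousAt.mul continuousAt_const
        apply ContinuousAt.sub continuousAt_const
        exact ContinuousAt.div continuousAt_const continuousAt_id one_ne_zero
    have h := this.tendsto
    simp only [Real.one_rpow, div_one, sub_self, mul_zero, Real.exp_zero, mul_one] at h
    exact h.mono_left nhdsWithin_le_nhds
  have hF := intervalIntegral.integral_eq_sub_of_hasDerivAt_of_tendsto zero_lt_one hd hIntg h0 h1
  rw [intervalIntegral.integral_of_le zero_le_one, integral_Ioc_eq_integral_Ioo,
    integral_add (hi1.const_mul _) (hi2.const_mul _), integral_const_mul, integral_const_mul] at hF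
  unfold Q
  linarith

lemma Q_eq_Ioi (x s : ℝ) : Q x s = ∫ t in Set.Ioi (1:ℝ), t^(s-1) * Real.exp (x*(1-t)) := by
  have him : (fun t : ℝ => t⁻¹) '' (Set.Ioo 0 1) = Set.Ioi 1 := by
    ext y
    simp only [Set.mem_image, Set.mem_Ioo, Set.mem_Ioi]
    constructor
    · rintro ⟨t, ht, rfl⟩
      exact (one_lt_inv₀ ht.1).mpr ht.2
    · intro h
      have h0 : 0 < y := by linarith
      exact ⟨y⁻¹, ⟨by positivity, inv_lt_one_of_one_lt₀ h⟩, inv_inv y⟩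
  have h := integral_image_eq_integral_abs_deriv_smul (s := Set.Ioo (0:ℝ) 1) (f := fun t : ℝ => t⁻¹)
    (f' := fun t => -(t^2)⁻¹) measurableSet_Ioo
    (fun t ht => (hasDerivAt_inv ht.1.ne').hasDerivWithinAt)
    (fun a _ b _ h => inv_injective h) (fun t => t^(s-1) * Real.exp (x*(1-t)))
  rw [him] at h
  rw [h, Q]
  apply setIntegral_congr_fun measurableSet_Ioo
  intro t ht
  have ht0 := ht.1
  simp only [smul_eq_mul, abs_neg, abs_inv, abs_pow, abs_of_pos ht0, one_div]
  rw [Real.inv_rpow ht0.le, ← Real.rpow_neg ht0.le, ← mul_assoc]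
  congr 1
  rw [show -s - 1 = -(s-1) - 2 by ring, Real.rpow_sub ht0 _ 2]
  norm_num
  ring

lemma PQ (x s : ℝ) (hx : 0 < x) (hs : 0 < s) :
    P x s + Q x s = Real.exp x * (Real.Gamma s * x^(-s)) := by
  have h := Real.integral_rpow_mul_exp_neg_mul_Ioi hs hx
  have hc : ∫ t in Set.Ioi (0:ℝ), t^(s-1) * Real.exp (x*(1-t)) = Real.exp x * (Real.Gamma s * x^(-s)) := by
    have : ∀ t : ℝ, t^(s-1) * Real.exp (x*(1-t)) = Real.exp x * (t^(s-1) * Real.exp (-(x*t))) := by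
      intro t
      rw [mul_left_comm, ← Real.exp_add]; congr 2; ring
    simp_rw [this]
    rw [integral_const_mul, h, one_div, Real.inv_rpow hx.le, Real.rpow_neg hx.le]
    ring
  have hIntg : IntegrableOn (fun t : ℝ => t^(s-1) * Real.exp (x*(1-t))) (Set.Ioi 0) := by
    apply Integrable.of_integral_ne_zero
    rw [hc]
    have := Real.Gamma_pos_of_pos hs
    positivity
  rw [← hc, Q_eq_Ioi, P, ← integral_Ioc_eq_integral_Ioo,
    ← Set.Ioc_union_Ioi_eq_Ioi (zero_le_one (α := ℝ)), setIntegral_union]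
  · exact Set.Ioc_disjoint_Ioi le_rfl
  · exact measurableSet_Ioi
  · exact hIntg.mono_set Set.Ioc_subset_Ioi_self
  · exact hIntg.mono_set (Set.Ioi_subset_Ioi zero_le_one)

lemma gQ_aux (x : ℝ) (hx : 0 < x) (n : ℕ) : ∀ s : ℝ, (∀ n : ℕ, s ≠ -(n:ℝ)) → 0 < s + n →
    Real.exp x * g x s = Real.exp x * (Real.Gamma s * x^(-s)) - Q x s := by
  induction n with
  | zero =>
    intro s hs h
    have h : 0 < s := by simpa using h
    rw [← P_eq x s h, ← PQ x s hx h]; ring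
  | succ n ih =>
    intro s hs h
    have hs1 : ∀ n : ℕ, s + 1 ≠ -(n:ℝ) := by simpa using shift_ne hs 1
    have h1 := ih (s+1) hs1 (by push_cast at h; linarith)
    have hs0 : s ≠ 0 := by simpa using hs 0
    have r1 := g_rec x s hs
    have r2 := Q_rec x s hx
    rw [Real.Gamma_add_one hs0] at h1
    have r3 : x^(-(s+1)) * x = x^(-s) := by
      rw [show -(s+1) = -s - 1 by ring, Real.rpow_sub_one hx.ne']; field_simp
    have r4 : Real.exp x * Real.exp (-x) = 1 := by rw [← Real.exp_add]; simp
    apply mul_left_cancel₀ hs0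
    rw [← r3]
    linear_combination Real.exp x * r1 + r2 + x * h1 + r4

lemma gQ (x s : ℝ) (hx : 0 < x) (hs : ∀ n : ℕ, s ≠ -(n:ℝ)) :
    Real.exp x * g x s = Real.exp x * (Real.Gamma s * x^(-s)) - Q x s := by
  obtain ⟨n, hn⟩ := exists_nat_gt (-s)
  exact gQ_aux x hx n s hs (by linarith)
end KS

namespace KS
open MeasureTheory

noncomputable def KR (A b z : ℝ) : ℝ :=
  ∑' n : ℕ, ((ascPochhammer ℝ n).eval A / (ascPochhammer ℝ n).eval b) * z ^ n / n.factorial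

noncomputable def G (m : ℕ) (a b x : ℝ) : ℝ :=
  1 / Real.Gamma b * KR (b-a) b (-x) - x^(a-b) / Real.Gamma a *
    ∑ j ∈ Finset.range m, (ascPochhammer ℝ j).eval (b-a) * (ascPochhammer ℝ j).eval (1-a) /
      (j.factorial * x^j)

lemma Gamma_asc (s : ℝ) (hs : ∀ n : ℕ, s ≠ -(n:ℝ)) (n : ℕ) :
    Real.Gamma (s+n) = Real.Gamma s * (ascPochhammer ℝ n).eval s := by
  induction n with
  | zero => simp
  | succ n ih =>
    have : s + n ≠ 0 := fun h => hs n (by linarith)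
    rw [ascPochhammer_succ_eval]
    push_cast
    rw [← add_assoc, Real.Gamma_add_one this, ih]; ring

lemma double_summable (c x A : ℝ) (hc : c < 1) (hA : ∀ n : ℕ, A ≠ -(n:ℝ)) :
    Summable (fun p : ℕ × ℕ => (-x)^p.1 / p.1.factorial * (kap c p.2 / (A + p.1 + p.2))) := by
  obtain ⟨C, hC, h⟩ := inv_bound A hA
  have h1 := (Real.summable_pow_div_factorial |x|).mul_of_nonneg ((kap_summable c hc).mul_left C)
    (fun n => by positivity) (fun k => by positivity)
  refine Summable.of_norm_bounded h1 ?_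
  rintro ⟨n, k⟩
  simp only [Real.norm_eq_abs]
  have hn := h (n+k)
  push_cast at hn
  rw [← add_assoc] at hn
  rw [abs_mul, abs_div, abs_pow, abs_neg, Nat.abs_cast]
  apply mul_le_mul_of_nonneg_left _ (by positivity)
  rw [div_eq_mul_one_div, abs_mul]
  calc |kap c k| * |1/(A+n+k)| ≤ |kap c k| * (C / ((k:ℝ)+1)) := by
        apply mul_le_mul_of_nonneg_left (hn.trans _) (abs_nonneg _)
        apply div_le_div_of_nonneg_left hC.le (by positivity)
        have : (0:ℝ) ≤ n := by positivity
        linarith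
    _ = _ := by ring

lemma inner_g (c x A : ℝ) (k : ℕ) :
    ∑' n : ℕ, (-x)^n / n.factorial * (kap c k / (A + n + k)) = kap c k * g x (A + k) := by
  rw [g, ← tsum_mul_left]
  congr 1; ext n
  rw [show A + n + k = A + k + n by ring]; ring

lemma g_sum_summable (c x A : ℝ) (hc : c < 1) (hA : ∀ n : ℕ, A ≠ -(n:ℝ)) :
    Summable fun k : ℕ => kap c k * g x (A+k) := by
  have h := (double_summable c x A hc hA).prod_symm.prod
  refine h.congr (fun k => ?_)
  rw [← inner_g]; rfl

lemma KR_eq (a b x : ℝ) (ha : 0 < a) (hb : ∀ n : ℕ, b ≠ -(n:ℝ)) (hA : ∀ n : ℕ, b - a ≠ -(n:ℝ)) :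
    Real.Gamma (b-a) * Real.Gamma a * (1 / Real.Gamma b * KR (b-a) b (-x)) =
      ∑' k : ℕ, kap (1-a) k * g x (b - a + k) := by
  have hc : 1 - a < 1 := by linarith
  have h := (double_summable (1-a) x (b-a) hc hA)
  have e := (h.tsum_comm' (fun n => h.prod_factor n) (fun k => h.prod_symm.prod_factor k))
  simp only [inner_g] at e
  rw [e, KR, ← tsum_mul_left, ← tsum_mul_left]
  congr 1; ext n
  rw [tsum_mul_left]
  have hf := f_eq (1-a) (b-a+n) hc (shift_ne hA n)
  rw [f] at hf
  rw [hf, Gamma_asc _ hA, show b - a + n + 1 - (1-a) = b + n by ring, Gamma_asc _ hb,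
    show 1 - (1-a) = a by ring]
  have h1 : Real.Gamma b ≠ 0 := Real.Gamma_ne_zero hb
  have h2 : (ascPochhammer ℝ n).eval b ≠ 0 := by
    intro h0
    have := Gamma_asc b hb n
    rw [h0, mul_zero] at this
    exact Real.Gamma_ne_zero (shift_ne hb n) this
  field_simp

lemma G_eq (m : ℕ) (a b x : ℝ) (ha : 0 < a) (hx : 0 < x) (hb : ∀ n : ℕ, b ≠ -(n:ℝ))
    (hA : ∀ n : ℕ, b - a ≠ -(n:ℝ)) (hm : 0 < b - a + m) :
    Real.exp x * (Real.Gamma (b-a) * Real.Gamma a * G m a b x) =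
      ∑' i : ℕ, kap (1-a) (m+i) * P x (b-a+m+i) -
        ∑ k ∈ Finset.range m, kap (1-a) k * Q x (b-a+k) := by
  have hc : 1 - a < 1 := by linarith
  have hs := g_sum_summable (1-a) x (b-a) hc hA
  have h1 := hs.sum_add_tsum_nat_add m
  have hGa : Real.Gamma a ≠ 0 := (Real.Gamma_pos_of_pos ha).ne'
  rw [G, mul_sub, KR_eq a b x ha hb hA, ← h1]
  have e1 : ∑' i : ℕ, kap (1-a) (m+i) * P x (b-a+m+i) =
      Real.exp x * ∑' i : ℕ, kap (1-a) (i+m) * g x (b-a+((i+m:ℕ):ℝ)) := by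
    rw [← tsum_mul_left]
    congr 1; ext i
    have : (0:ℝ) ≤ i := by positivity
    rw [P_eq _ _ (by linarith), add_comm m i]
    push_cast
    rw [show b - a + (i + m : ℝ) = b - a + m + i by ring]; ring
  have e2 : ∑ k ∈ Finset.range m, kap (1-a) k * Q x (b-a+k) =
      Real.exp x * (Real.Gamma (b-a) * Real.Gamma a * (x^(a-b) / Real.Gamma a *
    ∑ j ∈ Finset.range m, (ascPochhammer ℝ j).eval (b-a) * (ascPochhammer ℝ j).eval (1-a) /
      (j.factorial * x^j))) - Real.exp x * ∑ k ∈ Finset.range m, kap (1-a) k * g x (b-a+k) := by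
    rw [Finset.mul_sum, Finset.mul_sum, Finset.mul_sum, Finset.mul_sum, ← Finset.sum_sub_distrib]
    apply Finset.sum_congr rfl
    intro k _
    have h := gQ x (b-a+k) hx (shift_ne hA k)
    rw [Gamma_asc _ hA] at h
    have hq : Q x (b-a+k) = Real.exp x * (Real.Gamma (b-a) * (ascPochhammer ℝ k).eval (b-a) *
      x^(-(b-a+k))) - Real.exp x * g x (b-a+k) := by linarith
    have hp : x^(-(b-a+k)) = x^(a-b) / x^k := by
      rw [show -(b-a+k) = a - b - k by ring, Real.rpow_sub hx, Real.rpow_natCast]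
    rw [hq, hp, kap]
    field_simp
  rw [e1, e2]
  ring
end KS

namespace KS
open MeasureTheory

noncomputable def hp (x t : ℝ) : ℝ := Real.exp (-(x*(t-1-Real.log t)))
noncomputable def hq (x t : ℝ) : ℝ := Real.exp (-(x*(1/t-1+Real.log t)))

lemma decr_nonneg (h h' : ℝ → ℝ) (hd : ∀ t, 0 < t → HasDerivAt h (h' t) t)
    (hn : ∀ t, 0 < t → t < 1 → h' t ≤ 0) (h1 : h 1 = 0) (t : ℝ) (h0 : 0 < t) (ht : t < 1) : 0 ≤ h t := by
  have hanti : AntitoneOn h (Set.Icc t 1) := by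
    apply antitoneOn_of_deriv_nonpos (convex_Icc t 1)
    · intro s hs
      exact (hd s (by linarith [hs.1])).continuousAt.continuousWithinAt
    · intro s hs
      rw [interior_Icc] at hs
      exact (hd s (by linarith [hs.1])).differentiableAt.differentiableWithinAt
    · intro s hs
      rw [interior_Icc] at hs
      rw [(hd s (by linarith [hs.1])).deriv]
      exact hn s (by linarith [hs.1]) hs.2
  have := hanti (Set.left_mem_Icc.mpr ht.le) (Set.right_mem_Icc.mpr ht.le) ht.le
  linarith

lemma phi_lower (t : ℝ) (h0 : 0 < t) (h1 : t < 1) : (1-t)^2/2 ≤ t-1-Real.log t := by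
  have := decr_nonneg (fun t => t-1-Real.log t - (1-t)^2/2) (fun t => 1 - t⁻¹ + (1-t)) ?_ ?_ ?_ t h0 h1
  · linarith
  · intro s hs
    have := (((hasDerivAt_id s).sub_const 1).sub (Real.hasDerivAt_log hs.ne')).sub
      ((((hasDerivAt_id s).const_sub 1).pow 2).div_const 2)
    refine this.congr_deriv ?_
    simp; ring
  · intro s h0 h1
    have : 1 - s⁻¹ + (1-s) = -((1-s)^2 / s) := by field_simp; ring
    rw [this]
    have : 0 ≤ (1-s)^2/s := by positivity
    linarith
  · simp

lemma phi_upper (t : ℝ) (h0 : 0 < t) : t-1-Real.log t ≤ (1-t)^2/t := by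
  have := Real.one_sub_inv_le_log_of_pos h0
  have e : (1-t)^2/t = t - 1 - (1 - t⁻¹) := by field_simp; ring
  linarith

lemma psi_upper (t : ℝ) (h0 : 0 < t) : 1/t-1+Real.log t ≤ (1-t)^2/t := by
  have := Real.log_le_sub_one_of_pos h0
  have e : (1-t)^2/t = 1/t-1 + (t-1) := by field_simp; ring
  linarith

lemma psi_phi (t : ℝ) (h0 : 0 < t) (h1 : t < 1) : t-1-Real.log t ≤ 1/t-1+Real.log t := by
  have := decr_nonneg (fun t => t⁻¹ - t + 2*Real.log t) (fun t => -(t^2)⁻¹ - 1 + 2*t⁻¹) ?_ ?_ ?_ t h0 h1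
  · rw [one_div]; linarith
  · intro s hs
    exact (((hasDerivAt_inv hs.ne').sub (hasDerivAt_id s)).add ((Real.hasDerivAt_log hs.ne').const_mul 2))
  · intro s h0 h1
    have : -(s^2)⁻¹ - 1 + 2*s⁻¹ = -((1-s)^2 / s^2) := by field_simp; ring
    rw [this]
    have : 0 ≤ (1-s)^2/s^2 := by positivity
    linarith
  · simp

lemma psi_phi' (t : ℝ) (h0 : 0 < t) (h1 : t < 1) :
    (1/t-1+Real.log t) - (t-1-Real.log t) ≤ (1-t)^3/t^2 := by
  have := decr_nonneg (fun t => (1-t)^3*(t⁻¹)^2 - (t⁻¹ - t + 2*Real.log t))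
    (fun t => -(3*(1-t)^2)*(t⁻¹)^2 + (1-t)^3*(2*t⁻¹*(-(t^2)⁻¹)) - (-(t^2)⁻¹ - 1 + 2*t⁻¹)) ?_ ?_ ?_ t h0 h1
  · rw [one_div]
    have e : (1-t)^3/t^2 = (1-t)^3*(t⁻¹)^2 := by field_simp
    rw [e]; linarith
  · intro s hs
    have := ((((hasDerivAt_id s).const_sub 1).pow 3).mul ((hasDerivAt_inv hs.ne').pow 2)).sub
      (((hasDerivAt_inv hs.ne').sub (hasDerivAt_id s)).add ((Real.hasDerivAt_log hs.ne').const_mul 2))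
    refine this.congr_deriv ?_
    simp
  · intro s h0 h1
    have : -(3*(1-s)^2)*(s⁻¹)^2 + (1-s)^3*(2*s⁻¹*(-(s^2)⁻¹)) - (-(s^2)⁻¹ - 1 + 2*s⁻¹)
      = -(2*(1-s)^2 / s^2 + 2*(1-s)^3/s^3) := by field_simp; ring
    rw [this]
    have h2 : 0 ≤ 1 - s := by linarith
    have : 0 ≤ (2*(1-s)^2 / s^2 + 2*(1-s)^3/s^3) := by positivity
    linarith
  · simp

lemma hp_pos (x t : ℝ) : 0 < hp x t := Real.exp_pos _
lemma hq_pos (x t : ℝ) : 0 < hq x t := Real.exp_pos _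

lemma hq_le_hp (x t : ℝ) (hx : 0 < x) (h0 : 0 < t) (h1 : t < 1) : hq x t ≤ hp x t := by
  apply Real.exp_le_exp.mpr
  have := mul_le_mul_of_nonneg_left (psi_phi t h0 h1) hx.le
  linarith

lemma hp_le_one (x t : ℝ) (hx : 0 < x) (h0 : 0 < t) (h1 : t < 1) : hp x t ≤ 1 := by
  rw [hp, Real.exp_le_one_iff]
  have := phi_lower t h0 h1
  have h2 : 0 ≤ t-1-Real.log t := by nlinarith [sq_nonneg (1-t)]
  have := mul_nonneg hx.le h2
  linarith

lemma one_sub_hq (x t : ℝ) (hx : 1 ≤ x) (h0 : 0 < t) (h1 : t < 1) : 1 - hq x t ≤ 4*x*(1-t)^2 := by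
  by_cases ht : t < 1/2
  · have := hq_pos x t
    nlinarith [mul_le_mul hx (show (1/2:ℝ)^2 ≤ (1-t)^2 by nlinarith) (by norm_num) (by linarith)]
  · have h := Real.add_one_le_exp (-(x*(1/t-1+Real.log t)))
    have h2 := psi_upper t h0
    have h3 : (1-t)^2/t ≤ 2*(1-t)^2 := by
      rw [div_le_iff₀ h0]; push Not at ht; nlinarith [sq_nonneg (1-t)]
    have := mul_le_mul_of_nonneg_left (h2.trans h3) (show 0 ≤ x by linarith)
    rw [hq]
    nlinarith [mul_nonneg (show 0 ≤ x by linarith) (sq_nonneg (1-t))]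

lemma hp_sub_hq (x t : ℝ) (hx : 0 < x) (h0 : 0 < t) (h1 : t < 1) :
    hp x t - hq x t ≤ hp x t * (x * ((1-t)^3/t^2)) := by
  have e : hq x t = hp x t * Real.exp (-(x*((1/t-1+Real.log t) - (t-1-Real.log t)))) := by
    rw [hp, hq, ← Real.exp_add]; congr 1; ring
  have h := Real.add_one_le_exp (-(x*((1/t-1+Real.log t) - (t-1-Real.log t))))
  have h2 := mul_le_mul_of_nonneg_left (psi_phi' t h0 h1) hx.le
  rw [e]
  have := hp_pos x t
  have := mul_le_mul_of_nonneg_left (show 1 - Real.exp (-(x*((1/t-1+Real.log t) - (t-1-Real.log t)))) ≤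
    x * ((1-t)^3/t^2) by linarith) this.le
  linarith

lemma hp_damp (N x t : ℝ) (hN : 0 ≤ N) (hx : 4*N ≤ x) (h0 : 0 < t) (h1 : t < 1) :
    t^(-N) * hp x t ≤ Real.exp N * Real.exp (-(3/8*(x*(1-t)^2))) := by
  rw [Real.rpow_def_of_pos h0, hp, ← Real.exp_add, ← Real.exp_add]
  apply Real.exp_le_exp.mpr
  have h := phi_lower t h0 h1
  have h2 := mul_le_mul_of_nonneg_left h (show 0 ≤ x - N by linarith)
  nlinarith [mul_nonneg hN (show 0 ≤ t by linarith), sq_nonneg (1-t),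
    mul_nonneg (show 0 ≤ x - 4*N by linarith) (sq_nonneg (1-t))]

lemma rpow_diff (R r s t : ℝ) (hr : |r| ≤ R) (hs : |s| ≤ R) (h0 : 0 < t) (h1 : t < 1) :
    |t^r - t^s| ≤ 2*R*(1-t)*t^(-(3*R+1)) := by
  have hR : 0 ≤ R := (abs_nonneg _).trans hr
  have e : t^r - t^s = t^s * (t^(r-s) - 1) := by
    rw [mul_sub, ← Real.rpow_add h0]; ring_nf
  have h2 : t^s ≤ t^(-R) := Real.rpow_le_rpow_of_exponent_ge h0 h1.le (by linarith [(abs_le.mp hs).1])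
  have hl : Real.log t < 0 := Real.log_neg h0 h1
  have hl' : -Real.log t ≤ (1-t)*t⁻¹ := by
    have := Real.one_sub_inv_le_log_of_pos h0
    have e : (1-t)*t⁻¹ = t⁻¹ - 1 := by field_simp
    linarith
  have h3 : |t^(r-s) - 1| ≤ 2*R*(1-t)*t^(-(2*R+1)) := by
    have hrs := abs_le.mp hr
    have hss := abs_le.mp hs
    have hu : (0:ℝ) ≤ -Real.log t := by linarith
    have hexp : |Real.exp (Real.log t*(r-s)) - 1| ≤ (2*R*(-Real.log t)) * Real.exp (2*R*(-Real.log t)) := by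
      set u := Real.log t * (r-s) with hu'
      set v := 2*R*(-Real.log t) with hv
      have a1 : u ≤ v := by nlinarith
      have a2 : -v ≤ u := by nlinarith
      have a3 : 0 ≤ v := by positivity
      have b1 := Real.add_one_le_exp u
      have b2 := Real.add_one_le_exp (-v)
      have b3 : 1 ≤ Real.exp v := Real.one_le_exp a3
      have b4 : Real.exp u ≤ Real.exp v := Real.exp_le_exp.mpr a1
      have b5 : Real.exp v * Real.exp (-v) = 1 := by rw [← Real.exp_add]; simp
      rw [abs_le]; constructor
      · nlinarith
      · nlinarith [Real.exp_pos v]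
    rw [Real.rpow_def_of_pos h0]
    refine hexp.trans ?_
    have e1 : t^(-(2*R+1)) = Real.exp (2*R*(-Real.log t)) * t⁻¹ := by
      rw [neg_add, Real.rpow_add h0, Real.rpow_def_of_pos h0, Real.rpow_neg_one]; congr 2; ring
    rw [e1]
    have := mul_le_mul_of_nonneg_left hl' (show 0 ≤ 2*R*Real.exp (2*R*(-Real.log t)) by positivity)
    linarith
  rw [e, abs_mul, abs_of_pos (Real.rpow_pos_of_pos h0 _)]
  calc _ ≤ t^(-R) * (2*R*(1-t)*t^(-(2*R+1))) :=
        mul_le_mul h2 h3 (abs_nonneg _) (Real.rpow_nonneg h0.le _)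
    _ = 2*R*(1-t)*(t^(-R) * t^(-(2*R+1))) := by ring
    _ = _ := by rw [← Real.rpow_add h0]; ring_nf

lemma one_le_rpow_half (t : ℝ) (h0 : 0 < t) (h1 : t < 1) : 1 ≤ t^(-(1/2):ℝ) := by
  apply Real.one_le_rpow_of_pos_of_le_one_of_nonpos h0 h1.le (by norm_num)

/-- bound for U and V -/
lemma UV_bound (R : ℝ) (hR : 1 ≤ R) : ∃ C, 0 < C ∧ ∀ x r t : ℝ, 4*(3*R+1) ≤ x → |r| ≤ R → 0 < t → t < 1 →
    ∀ h, 0 < h → h ≤ hp x t → hq x t ≤ h → 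
    |t^r * h - t^(-(1/2):ℝ)| ≤ C * (t^(-(1/2):ℝ) * ((1-t) + x*(1-t)^2)) ∧
    |t^r * h - t^(-(1/2):ℝ)| ≤ C * t^(-(1/2):ℝ) := by
  refine ⟨2*R*Real.exp (3*R+1) + 4, by positivity, ?_⟩
  intro x r t hx hr h0 h1 h hpos hle hge
  have ht := one_le_rpow_half t h0 h1
  have hd := hp_damp (3*R+1) x t (by linarith) hx h0 h1
  have hE : Real.exp (-(3/8*(x*(1-t)^2))) ≤ 1 := by
    rw [Real.exp_le_one_iff]
    have : 0 ≤ x * (1-t)^2 := mul_nonneg (by linarith) (sq_nonneg _)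
    linarith
  have hd1 : t^(-(3*R+1)) * h ≤ Real.exp (3*R+1) := by
    calc _ ≤ t^(-(3*R+1)) * hp x t := mul_le_mul_of_nonneg_left hle (Real.rpow_nonneg h0.le _)
      _ ≤ _ := hd
      _ ≤ Real.exp (3*R+1) * 1 := mul_le_mul_of_nonneg_left hE (Real.exp_pos _).le
      _ = _ := mul_one _
  have hrd := rpow_diff R r (-(1/2)) t hr (by rw [abs_neg, abs_of_pos] <;> linarith) h0 h1
  have h2 : |t^r - t^(-(1/2):ℝ)| * h ≤ 2*R*Real.exp (3*R+1) * (1-t) := by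
    calc _ ≤ (2*R*(1-t)*t^(-(3*R+1))) * h := mul_le_mul_of_nonneg_right hrd hpos.le
      _ = (2*R*(1-t)) * (t^(-(3*R+1)) * h) := by ring
      _ ≤ (2*R*(1-t)) * Real.exp (3*R+1) := 
        mul_le_mul_of_nonneg_left hd1 (mul_nonneg (by linarith) (by linarith))
      _ = _ := by ring
  have hq1 := one_sub_hq x t (by linarith) h0 h1
  have hh1 : h ≤ 1 := hle.trans (hp_le_one x t (by linarith) h0 h1)
  have e : t^r * h - t^(-(1/2):ℝ) = (t^r - t^(-(1/2):ℝ))*h - t^(-(1/2):ℝ)*(1-h) := by ring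
  have h3 : |t^r * h - t^(-(1/2):ℝ)| ≤ 2*R*Real.exp (3*R+1) * (1-t) + t^(-(1/2):ℝ)*(1-h) := by
    rw [e]
    refine (abs_sub _ _).trans (add_le_add ?_ ?_)
    · rw [abs_mul, abs_of_pos hpos]; exact h2
    · rw [abs_of_nonneg]; exact mul_nonneg (by linarith) (by linarith)
  have hM : 0 < 2*R*Real.exp (3*R+1) := by positivity
  set M := 2*R*Real.exp (3*R+1)
  set T := t^(-(1/2):ℝ)
  have hx2 : 0 ≤ x*(1-t)^2 := mul_nonneg (by linarith) (sq_nonneg _)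
  constructor
  · refine h3.trans ?_
    have a1 : T*(1-h) ≤ T*(4*x*(1-t)^2) := mul_le_mul_of_nonneg_left (by linarith) (by linarith)
    have a2 : M*(1-t) ≤ T*(M*(1-t)) := le_mul_of_one_le_left (mul_nonneg hM.le (by linarith)) ht
    have a3 : 0 ≤ T*(M*(x*(1-t)^2)) := by positivity
    have a4 : 0 ≤ T*(1-t) := mul_nonneg (by linarith) (by linarith)
    nlinarith
  · refine h3.trans ?_
    have a1 : T*(1-h) ≤ T := mul_le_of_le_one_right (by linarith) (by linarith)
    have a2 : M*(1-t) ≤ M*T := mul_le_mul_of_nonneg_left (by linarith) hM.le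
    nlinarith

lemma W_bound (R : ℝ) (hR : 1 ≤ R) : ∃ C, 0 < C ∧ ∀ x r s t : ℝ, 4*(3*R+1) ≤ x → |r| ≤ R → |s| ≤ R →
    0 < t → t < 1 →
    |t^r * hp x t - t^s * hq x t| ≤ C * ((1-t) * Real.exp (-(1/4*(x*(1-t)^2)))) := by
  refine ⟨(8 + 2*R)*Real.exp (3*R+1), by positivity, ?_⟩
  intro x r s t hx hr hs h0 h1
  have hd := hp_damp (3*R+1) x t (by linarith) hx h0 h1
  have hx0 : 0 < x := by linarith
  have e : t^r * hp x t - t^s * hq x t = t^r*(hp x t - hq x t) + (t^r - t^s)*hq x t := by ring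
  set E := Real.exp (-(1/4*(x*(1-t)^2))) with hE
  have hw : 0 ≤ x*(1-t)^2 := mul_nonneg hx0.le (sq_nonneg _)
  have e1 : Real.exp (-(3/8*(x*(1-t)^2))) = E * Real.exp (-(1/8*(x*(1-t)^2))) := by
    rw [hE, ← Real.exp_add]; congr 1; ring
  have e2 : Real.exp (-(1/8*(x*(1-t)^2))) ≤ 1 := by rw [Real.exp_le_one_iff]; linarith
  have e3 : (x*(1-t)^2) * Real.exp (-(1/8*(x*(1-t)^2))) ≤ 8 := by
    have := Real.add_one_le_exp (1/8*(x*(1-t)^2))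
    rw [Real.exp_neg, ← div_eq_mul_inv, div_le_iff₀ (Real.exp_pos _)]
    linarith
  have hEp : 0 < E := Real.exp_pos _
  have b1 : |(t^r - t^s)*hq x t| ≤ 2*R*Real.exp (3*R+1) * ((1-t)*E) := by
    rw [abs_mul, abs_of_pos (hq_pos x t)]
    calc _ ≤ (2*R*(1-t)*t^(-(3*R+1))) * hp x t := mul_le_mul (rpow_diff R r s t hr hs h0 h1)
          (hq_le_hp x t hx0 h0 h1) (hq_pos _ _).le (by
            have := Real.rpow_nonneg h0.le (-(3*R+1))
            have : 0 ≤ 1-t := by linarith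
            positivity)
      _ = 2*R*(1-t)*(t^(-(3*R+1)) * hp x t) := by ring
      _ ≤ 2*R*(1-t)*(Real.exp (3*R+1) * (E * 1)) := by
          apply mul_le_mul_of_nonneg_left _ (mul_nonneg (by linarith) (by linarith))
          refine hd.trans ?_
          rw [e1]
          gcongr
      _ = _ := by ring
  have b2 : |t^r*(hp x t - hq x t)| ≤ 8*Real.exp (3*R+1) * ((1-t)*E) := by
    have p1 : 0 ≤ hp x t - hq x t := by linarith [hq_le_hp x t hx0 h0 h1]
    rw [abs_of_nonneg (mul_nonneg (Real.rpow_nonneg h0.le _) p1)]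
    have p2 : t^r ≤ t^(-(3*R+1)) * t^2 := by
      rw [← Real.rpow_natCast, ← Real.rpow_add h0]
      exact Real.rpow_le_rpow_of_exponent_ge h0 h1.le (by push_cast; linarith [(abs_le.mp hr).1])
    calc _ ≤ (t^(-(3*R+1)) * t^2) * (hp x t * (x * ((1-t)^3/t^2))) := 
          mul_le_mul p2 (hp_sub_hq x t hx0 h0 h1) p1 (mul_nonneg (Real.rpow_nonneg h0.le _) (sq_nonneg _))
      _ = (x*(1-t)^2)*(1-t) * (t^(-(3*R+1)) * hp x t) := by field_simp
      _ ≤ (x*(1-t)^2)*(1-t) * (Real.exp (3*R+1) * (E * Real.exp (-(1/8*(x*(1-t)^2))))) := by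
          rw [← e1]
          exact mul_le_mul_of_nonneg_left hd (mul_nonneg hw (by linarith))
      _ = ((x*(1-t)^2) * Real.exp (-(1/8*(x*(1-t)^2)))) * (Real.exp (3*R+1) * ((1-t)*E)) := by ring
      _ ≤ 8 * (Real.exp (3*R+1) * ((1-t)*E)) := by
          apply mul_le_mul_of_nonneg_right e3
          have : 0 ≤ 1-t := by linarith
          positivity
      _ = _ := by ring
  rw [e]
  refine (abs_add_le _ _).trans ((add_le_add b2 b1).trans (le_of_eq (by ring)))

end KS

namespace KS
open MeasureTheory

noncomputable def mom (F : ℝ → ℝ) (i n : ℕ) : ℝ := ∫ t in Set.Ioo (0:ℝ) 1, t^i * (1-t)^n * F t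

lemma bet_integrable (i n : ℕ) :
    IntegrableOn (fun t : ℝ => t^i * (1-t)^n * t^(-(1/2):ℝ)) (Set.Ioo (0:ℝ) 1) := by
  apply Integrable.bdd_mul (c := 1) (integrable_rpow _ (by norm_num))
  · exact (Continuous.aestronglyMeasurable (by fun_prop))
  · rw [ae_restrict_iff' measurableSet_Ioo]
    refine ae_of_all _ (fun t ht => ?_)
    have h0 := ht.1
    have h1 := ht.2
    rw [Real.norm_eq_abs, abs_of_nonneg (mul_nonneg (pow_nonneg h0.le _) (pow_nonneg (by linarith) _))]
    exact mul_le_one₀ (pow_le_one₀ h0.le h1.le) (pow_nonneg (by linarith) _)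
      (pow_le_one₀ (by linarith) (by linarith))

lemma Gamma_ge (s : ℝ) (hs : 0 < s) (n : ℕ) : Real.Gamma s * s^n ≤ Real.Gamma (s+n) := by
  induction n with
  | zero => simp
  | succ n ih =>
    push_cast
    have hn : (0:ℝ) ≤ n := by positivity
    rw [← add_assoc, Real.Gamma_add_one (by positivity)]
    have := Real.Gamma_pos_of_pos hs
    calc _ = s * (Real.Gamma s * s^n) := by ring
      _ ≤ (s+n) * Real.Gamma (s+n) := mul_le_mul (by linarith) ih (by positivity) (by positivity)

lemma bet_le (n : ℕ) : ∃ C : ℝ, 0 < C ∧ ∀ i : ℕ,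
    ∫ t in Set.Ioo (0:ℝ) 1, t^i * (1-t)^n * t^(-(1/2):ℝ) ≤ C / ((i:ℝ)+1)^(n+1) := by
  refine ⟨n.factorial * 2^(n+1), by positivity, fun i => ?_⟩
  have h := beta_real ((i:ℝ)+1/2) ((n:ℝ)+1) (by positivity) (by positivity)
  have e : ∫ t in Set.Ioo (0:ℝ) 1, t^i * (1-t)^n * t^(-(1/2):ℝ) =
      ∫ t in Set.Ioo (0:ℝ) 1, t^((i:ℝ)+1/2-1) * (1-t)^((n:ℝ)+1-1) := by
    apply setIntegral_congr_fun measurableSet_Ioo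
    intro t ht
    simp only
    rw [add_sub_cancel_right, Real.rpow_natCast, show (i:ℝ)+1/2-1 = -(1/2) + i by ring,
      Real.rpow_add ht.1, Real.rpow_natCast]; ring
  rw [e, h, Real.Gamma_nat_eq_factorial]
  have g := Gamma_ge ((i:ℝ)+1/2) (by positivity) (n+1)
  push_cast at g
  have gp : 0 < Real.Gamma ((i:ℝ)+1/2) := Real.Gamma_pos_of_pos (by positivity)
  have gp2 : 0 < Real.Gamma ((i:ℝ)+1/2+(n+1)) := Real.Gamma_pos_of_pos (by positivity)
  rw [div_le_div_iff₀ gp2 (by positivity)]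
  have h2 : ((i:ℝ)+1)^(n+1) ≤ 2^(n+1) * ((i:ℝ)+1/2)^(n+1) := by
    rw [← mul_pow]
    apply pow_le_pow_left₀ (by positivity)
    have : (0:ℝ) ≤ i := by positivity
    linarith
  calc _ = n.factorial * Real.Gamma ((i:ℝ)+1/2) * ((i:ℝ)+1)^(n+1) := by ring
    _ ≤ n.factorial * Real.Gamma ((i:ℝ)+1/2) * (2^(n+1) * ((i:ℝ)+1/2)^(n+1)) := by gcongr
    _ = n.factorial * 2^(n+1) * (Real.Gamma ((i:ℝ)+1/2) * ((i:ℝ)+1/2)^(n+1)) := by ring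
    _ ≤ _ := mul_le_mul_of_nonneg_left g (by positivity)

lemma mom_bound1 : ∃ C : ℝ, 0 < C ∧ ∀ (F : ℝ → ℝ) (D : ℝ), 0 < D →
    (∀ t, 0 < t → t < 1 → |F t| ≤ D * t^(-(1/2):ℝ)) → ∀ i : ℕ, |mom F i 0| ≤ C * D / ((i:ℝ)+1) := by
  obtain ⟨C, hC, h⟩ := bet_le 0
  refine ⟨C, hC, fun F D hD hF i => ?_⟩
  have := norm_integral_le_of_norm_le (μ := volume.restrict (Set.Ioo (0:ℝ) 1))
    (f := fun t => t^i * (1-t)^0 * F t) ((bet_integrable i 0).const_mul D) ?_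
  · rw [Real.norm_eq_abs, integral_const_mul] at this
    refine this.trans ((mul_le_mul_of_nonneg_left (h i) hD.le).trans (le_of_eq ?_))
    simp; ring
  · rw [ae_restrict_iff' measurableSet_Ioo]
    refine ae_of_all _ (fun t ht => ?_)
    have h0 := ht.1
    have := hF t ht.1 ht.2
    rw [Real.norm_eq_abs, abs_mul, pow_zero, mul_one, abs_of_pos (pow_pos h0 _)]
    calc _ ≤ t^i * (D * t^(-(1/2):ℝ)) := by gcongr
      _ = _ := by ring

lemma mom_bound2 (n : ℕ) : ∃ C : ℝ, 0 < C ∧ ∀ (F : ℝ → ℝ) (D x : ℝ), 0 < D → 0 < x →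
    (∀ t, 0 < t → t < 1 → |F t| ≤ D * (t^(-(1/2):ℝ) * ((1-t) + x*(1-t)^2))) → ∀ i : ℕ,
    |mom F i n| ≤ C * D * (1 / ((i:ℝ)+1)^(n+2) + x / ((i:ℝ)+1)^(n+3)) := by
  obtain ⟨C1, hC1, h1⟩ := bet_le (n+1)
  obtain ⟨C2, hC2, h2⟩ := bet_le (n+2)
  refine ⟨C1 + C2, by positivity, fun F D x hD hx hF i => ?_⟩
  have := norm_integral_le_of_norm_le (μ := volume.restrict (Set.Ioo (0:ℝ) 1))
    (f := fun t => t^i * (1-t)^n * F t)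
    (((bet_integrable i (n+1)).const_mul D).add ((bet_integrable i (n+2)).const_mul (D*x))) ?_
  · rw [Real.norm_eq_abs] at this
    simp only [Pi.add_apply] at this
    rw [integral_add ((bet_integrable i (n+1)).const_mul D) ((bet_integrable i (n+2)).const_mul (D*x)),
      integral_const_mul, integral_const_mul] at this
    refine this.trans ?_
    have a1 := mul_le_mul_of_nonneg_left (h1 i) hD.le
    have a2 := mul_le_mul_of_nonneg_left (h2 i) (mul_pos hD hx).le
    have a3 : 0 ≤ C1*D*(x/((i:ℝ)+1)^(n+3)) := by positivity
    have a4 : 0 ≤ C2*D*(1/((i:ℝ)+1)^(n+2)) := by positivity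
    have e1 : D * (C1 / ((i:ℝ)+1)^(n+1+1)) = C1*D*(1/((i:ℝ)+1)^(n+2)) := by ring
    have e2 : D * x * (C2 / ((i:ℝ)+1)^(n+2+1)) = C2*D*(x/((i:ℝ)+1)^(n+3)) := by ring
    rw [e1] at a1
    rw [e2] at a2
    nlinarith
  · rw [ae_restrict_iff' measurableSet_Ioo]
    refine ae_of_all _ (fun t ht => ?_)
    have h0 := ht.1
    have h1 : 0 ≤ 1-t := by linarith [ht.2]
    have := hF t ht.1 ht.2
    rw [Real.norm_eq_abs, abs_mul, abs_of_nonneg (by positivity)]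
    simp only [Pi.add_apply]
    calc _ ≤ t^i * (1-t)^n * (D * (t^(-(1/2):ℝ) * ((1-t) + x*(1-t)^2))) := by gcongr
      _ = _ := by ring

lemma mom_integrable (F : ℝ → ℝ) (D : ℝ) (hm : Measurable F)
    (hF : ∀ t, 0 < t → t < 1 → |F t| ≤ D * t^(-(1/2):ℝ)) (i n : ℕ) :
    IntegrableOn (fun t => t^i * (1-t)^n * F t) (Set.Ioo (0:ℝ) 1) := by
  refine Integrable.mono' ((bet_integrable i n).const_mul D) ?_ ?_
  · exact (Measurable.mul (by fun_prop) hm).aestronglyMeasurable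
  · rw [ae_restrict_iff' measurableSet_Ioo]
    refine ae_of_all _ (fun t ht => ?_)
    have h0 := ht.1
    have h1 : 0 ≤ 1-t := by linarith [ht.2]
    have := hF t ht.1 ht.2
    rw [Real.norm_eq_abs, abs_mul, abs_of_nonneg (by positivity)]
    calc _ ≤ t^i * (1-t)^n * (D * (t^(-(1/2):ℝ))) := by gcongr
      _ = _ := by ring

lemma mom_rec (F : ℝ → ℝ) (D : ℝ) (hm : Measurable F)
    (hF : ∀ t, 0 < t → t < 1 → |F t| ≤ D * t^(-(1/2):ℝ)) (i n : ℕ) :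
    mom F i (n+1) = mom F i n - mom F (i+1) n := by
  unfold mom
  rw [← integral_sub (mom_integrable F D hm hF i n) (mom_integrable F D hm hF (i+1) n)]
  congr 1; ext t; ring

noncomputable def U (x r t : ℝ) : ℝ := t^r * hp x t - t^(-(1/2):ℝ)
noncomputable def V (x r t : ℝ) : ℝ := t^r * hq x t - t^(-(1/2):ℝ)

lemma U_meas (x r : ℝ) : Measurable (U x r) := by unfold U hp; fun_prop
lemma V_meas (x r : ℝ) : Measurable (V x r) := by unfold V hq; fun_prop

lemma half_int (i : ℕ) : IntegrableOn (fun t : ℝ => t^i * t^(-(1/2):ℝ)) (Set.Ioo (0:ℝ) 1) := by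
  simpa using bet_integrable i 0

lemma half_eq (i : ℕ) : ∫ t in Set.Ioo (0:ℝ) 1, t^i * t^(-(1/2):ℝ) = 1/((i:ℝ)+1/2) := by
  have : (0:ℝ) ≤ i := by positivity
  rw [show (i:ℝ)+1/2 = (-(1/2) + i) + 1 by ring, ← integral_rpow' _ (by linarith)]
  apply setIntegral_congr_fun measurableSet_Ioo
  intro t ht
  simp only
  rw [Real.rpow_add ht.1, Real.rpow_natCast]; ring

lemma P_mom (x r D : ℝ) (hF : ∀ t, 0 < t → t < 1 → |U x r t| ≤ D * t^(-(1/2):ℝ)) (i : ℕ) :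
    P x (r+1+x+i) - 1/((i:ℝ)+1/2) = mom (U x r) i 0 := by
  have h1 := mom_integrable _ D (U_meas x r) hF i 0
  have e : mom (U x r) i 0 + 1/((i:ℝ)+1/2) = P x (r+1+x+i) := by
    rw [← half_eq, mom, ← integral_add h1 (half_int i), P]
    apply setIntegral_congr_fun measurableSet_Ioo
    intro t ht
    simp only [U, hp]
    rw [show r+1+x+i-1 = r + x + i by ring, Real.rpow_add ht.1, Real.rpow_add ht.1, Real.rpow_natCast,
      Real.rpow_def_of_pos ht.1 x, show -(x*(t-1-Real.log t)) = Real.log t * x + x*(1-t) by ring,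
      Real.exp_add]
    ring
  linarith

lemma Q_mom (x r D : ℝ) (hF : ∀ t, 0 < t → t < 1 → |V x r t| ≤ D * t^(-(1/2):ℝ)) (i : ℕ) :
    Q x (x-r-1-i) - 1/((i:ℝ)+1/2) = mom (V x r) i 0 := by
  have h1 := mom_integrable _ D (V_meas x r) hF i 0
  have e : mom (V x r) i 0 + 1/((i:ℝ)+1/2) = Q x (x-r-1-i) := by
    rw [← half_eq, mom, ← integral_add h1 (half_int i), Q]
    apply setIntegral_congr_fun measurableSet_Ioo
    intro t ht
    simp only [V, hq]
    rw [show -(x-r-1-i)-1 = r + (-x) + i by ring, Real.rpow_add ht.1, Real.rpow_add ht.1, Real.rpow_natCast,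
      Real.rpow_def_of_pos ht.1 (-x), show -(x*(1/t-1+Real.log t)) = Real.log t * (-x) + x*(1-1/t) by ring,
      Real.exp_add]
    ring
  linarith

lemma gauss_bound (x : ℝ) (hx : 0 < x) :
    IntegrableOn (fun t : ℝ => Real.exp (-(1/4*(x*(1-t)^2)))) (Set.Ioo 0 1) ∧
    ∫ t in Set.Ioo (0:ℝ) 1, Real.exp (-(1/4*(x*(1-t)^2))) ≤ Real.sqrt (4*Real.pi) * x^(-(1/2):ℝ) := by
  have hI : Integrable (fun t : ℝ => Real.exp (-(1/4*(x*(1-t)^2)))) := by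
    have := (integrable_exp_neg_mul_sq (show 0 < x/4 by positivity)).comp_sub_left 1
    refine this.congr (ae_of_all _ fun t => ?_)
    simp only; congr 1; ring
  refine ⟨hI.integrableOn, ?_⟩
  refine (setIntegral_le_integral hI (ae_of_all _ fun t => (Real.exp_pos _).le)).trans ?_
  have e : ∫ t : ℝ, Real.exp (-(1/4*(x*(1-t)^2))) = ∫ t : ℝ, Real.exp (-(x/4)*t^2) := by
    rw [← integral_sub_left_eq_self (fun t : ℝ => Real.exp (-(x/4)*t^2)) volume 1]
    congr 1; ext t; congr 1; ring
  rw [e, integral_gaussian]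
  rw [show Real.pi / (x/4) = (4*Real.pi) * x⁻¹ by field_simp, Real.sqrt_mul (by positivity),
    Real.sqrt_eq_rpow x⁻¹, Real.inv_rpow hx.le, ← Real.rpow_neg hx.le]

lemma W_sum (R : ℝ) (hR : 1 ≤ R) : ∃ C, 0 < C ∧ ∀ x r s D : ℝ, 4*(3*R+1) ≤ x → |r| ≤ R → |s| ≤ R →
    (∀ t, 0 < t → t < 1 → |U x r t| ≤ D * t^(-(1/2):ℝ)) →
    (∀ t, 0 < t → t < 1 → |V x s t| ≤ D * t^(-(1/2):ℝ)) → ∀ M : ℕ,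
    ∑ i ∈ Finset.range M, |mom (U x r) i 0 - mom (V x s) i 0| ≤ C * x^(-(1/2):ℝ) := by
  obtain ⟨C, hC, h⟩ := W_bound R hR
  refine ⟨C * Real.sqrt (4*Real.pi), by positivity, ?_⟩
  intro x r s D hx hr hs hU hV M
  have hx0 : 0 < x := by linarith
  obtain ⟨g1, g2⟩ := gauss_bound x hx0
  have hI : ∀ i, IntegrableOn (fun t => t^i * (1-t)^0 * U x r t - t^i * (1-t)^0 * V x s t) (Set.Ioo (0:ℝ) 1) :=
    fun i => (mom_integrable _ D (U_meas x r) hU i 0).sub (mom_integrable _ D (V_meas x s) hV i 0)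
  calc _ ≤ ∑ i ∈ Finset.range M, ∫ t in Set.Ioo (0:ℝ) 1, 
        ‖t^i * (1-t)^0 * U x r t - t^i * (1-t)^0 * V x s t‖ := by
        apply Finset.sum_le_sum
        intro i _
        rw [mom, mom, ← integral_sub (mom_integrable _ D (U_meas x r) hU i 0)
          (mom_integrable _ D (V_meas x s) hV i 0)]
        rw [← Real.norm_eq_abs]
        exact norm_integral_le_integral_norm _
    _ = ∫ t in Set.Ioo (0:ℝ) 1, ∑ i ∈ Finset.range M,
        ‖t^i * (1-t)^0 * U x r t - t^i * (1-t)^0 * V x s t‖ := by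
        rw [integral_finsetSum _ (fun i _ => (hI i).norm)]
    _ ≤ ∫ t in Set.Ioo (0:ℝ) 1, C * Real.exp (-(1/4*(x*(1-t)^2))) := by
        apply setIntegral_mono_on _ (g1.const_mul C) measurableSet_Ioo
        · intro t ht
          have h0 := ht.1
          have h1 : 0 < 1-t := by linarith [ht.2]
          have hw := h x r s t hx hr hs h0 ht.2
          have e : ∀ i ∈ Finset.range M, ‖t^i * (1-t)^0 * U x r t - t^i * (1-t)^0 * V x s t‖ =
              t^i * |t^r * hp x t - t^s * hq x t| := by
            intro i _
            rw [Real.norm_eq_abs, ← abs_of_pos (pow_pos h0 i), ← abs_mul, abs_of_pos (pow_pos h0 i)]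
            congr 1
            unfold U V; ring
          rw [Finset.sum_congr rfl e, ← Finset.sum_mul]
          have hg : (∑ i ∈ Finset.range M, t^i) * (1-t) ≤ 1 := by
            rw [geom_sum_mul_neg]
            linarith [pow_pos h0 M]
          have hg0 : 0 ≤ ∑ i ∈ Finset.range M, t^i := Finset.sum_nonneg (fun i _ => by positivity)
          calc _ ≤ (∑ i ∈ Finset.range M, t^i) * (C * ((1-t) * Real.exp (-(1/4*(x*(1-t)^2))))) := 
                mul_le_mul_of_nonneg_left hw hg0
            _ = ((∑ i ∈ Finset.range M, t^i) * (1-t)) * (C * Real.exp (-(1/4*(x*(1-t)^2)))) := by ring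
            _ ≤ 1 * (C * Real.exp (-(1/4*(x*(1-t)^2)))) := 
                mul_le_mul_of_nonneg_right hg (by positivity)
            _ = _ := one_mul _
        · exact integrable_finsetSum _ (fun i _ => (hI i).norm)
    _ = C * ∫ t in Set.Ioo (0:ℝ) 1, Real.exp (-(1/4*(x*(1-t)^2))) := integral_const_mul _ _
    _ ≤ _ := by rw [mul_assoc]; exact mul_le_mul_of_nonneg_left g2 hC.le

end KS

namespace KS
open MeasureTheory

lemma tele_le (s u : ℝ) (hs : 0 < s) (hu : s + 1 = u) : 1/u^2 ≤ 1/s - 1/u := by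
  subst hu
  rw [div_sub_div _ _ hs.ne' (by positivity), div_le_div_iff₀ (by positivity) (by positivity)]
  nlinarith

lemma tele_sum (s : ℝ) (hs : 0 < s) (M : ℕ) :
    ∑ i ∈ Finset.range M, 1/(s+((i:ℝ)+1))^2 ≤ 1/s := by
  have : ∑ i ∈ Finset.range M, 1/(s+((i:ℝ)+1))^2 ≤ 1/s - 1/(s+M) := by
    induction M with
    | zero => simp
    | succ M ih =>
      rw [Finset.sum_range_succ]
      have := tele_le (s+M) (s+((M:ℝ)+1)) (by positivity) (by ring)
      push_cast
      linarith
  have h2 : 0 < 1/(s+M) := by positivity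
  linarith

lemma sum_E1 (x D : ℝ) (hx : 0 < x) (hD : 0 < D) (e : ℕ → ℝ) (M : ℕ) (hM : (M:ℝ) ≤ x)
    (h1 : ∀ i : ℕ, |e i| ≤ D/((i:ℝ)+1)) (h2 : ∀ i : ℕ, |e i| ≤ D*(1/((i:ℝ)+1)^2 + x/((i:ℝ)+1)^3)) :
    ∑ i ∈ Finset.range M, (2*(i:ℝ)+1)*|e i| ≤ 12*D*Real.sqrt x := by
  have hs : 0 < Real.sqrt x := Real.sqrt_pos.mpr hx
  have hs2 : Real.sqrt x * Real.sqrt x = x := Real.mul_self_sqrt hx.le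
  set s := Real.sqrt x
  have key : ∀ i ∈ Finset.range M, (2*(i:ℝ)+1)*|e i| ≤ (12*D*x) * (1/(s+((i:ℝ)+1))^2) := by
    intro i hi
    have hi' : (i:ℝ) + 1 ≤ x := by
      have : i + 1 ≤ M := Finset.mem_range.mp hi
      have : ((i+1:ℕ):ℝ) ≤ M := by exact_mod_cast this
      push_cast at this; linarith
    have hn : (0:ℝ) < (i:ℝ)+1 := by positivity
    have h1 := h1 i
    have h2 := h2 i
    have h3 : 2*(i:ℝ)+1 ≤ 2*((i:ℝ)+1) := by linarith
    set n := (i:ℝ)+1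
    have hw0 : 0 ≤ |e i| := abs_nonneg _
    set w := |e i|
    have a1 : n*w ≤ D := by
      calc n*w ≤ n*(D/n) := by gcongr
        _ = D := by field_simp
    have a2 : n*w*n^2 ≤ 2*D*x := by
      calc n*w*n^2 ≤ n*(D*(1/n^2+x/n^3))*n^2 := by gcongr
        _ = D*(n + x) := by field_simp
        _ ≤ _ := by nlinarith
    rw [mul_one_div, le_div_iff₀ (by positivity)]
    calc (2*(i:ℝ)+1)*w*(s+n)^2 ≤ (2*n)*w*(2*(x+n^2)) := by
          gcongr
          nlinarith [sq_nonneg (s-n)]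
      _ = 4*((n*w)*x + n*w*n^2) := by ring
      _ ≤ 4*(D*x + 2*D*x) := by gcongr
      _ = _ := by ring
  refine (Finset.sum_le_sum key).trans ?_
  rw [← Finset.mul_sum]
  calc _ ≤ (12*D*x)*(1/s) := mul_le_mul_of_nonneg_left (tele_sum s hs M) (by positivity)
    _ = 12*D*s := by rw [← hs2]; field_simp

lemma sum_E3 (Y : ℝ) (hY : 0 < Y) (M : ℕ) (hM : 0 < M) (u : ℕ → ℝ)
    (h : ∀ i : ℕ, |u i| ≤ Y * (1/((M:ℝ)+((i:ℝ)+1))^2)) :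
    Summable u ∧ |∑' i, u i| ≤ Y/M := by
  have hM' : (0:ℝ) < M := by exact_mod_cast hM
  have hb : ∀ n, ∑ i ∈ Finset.range n, |u i| ≤ Y/M := by
    intro n
    refine (Finset.sum_le_sum (fun i _ => h i)).trans ?_
    rw [← Finset.mul_sum]
    calc _ ≤ Y * (1/M) := mul_le_mul_of_nonneg_left (tele_sum M hM' n) hY.le
      _ = _ := by ring
  have hs : Summable (fun i => |u i|) := summable_of_sum_range_le (fun _ => abs_nonneg _) hb
  refine ⟨hs.of_abs, ?_⟩
  have := norm_tsum_le_tsum_norm (f := u) (by simpa using hs)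
  simp only [Real.norm_eq_abs] at this
  exact this.trans (Real.tsum_le_of_sum_range_le (fun _ => abs_nonneg _) hb)

lemma sum_rpow_le (c : ℝ) (h0 : 0 < c) (h1 : c < 1) (N : ℕ) :
    ∑ k ∈ Finset.range N, ((k:ℝ)+1)^(c-1) ≤ 1/c * (N:ℝ)^c := by
  induction N with
  | zero => simp [Real.zero_rpow h0.ne']
  | succ N ih =>
    rw [Finset.sum_range_succ]
    push_cast
    have hN : (0:ℝ) < (N:ℝ)+1 := by positivity
    -- concavity
    have hb : ((N:ℝ)/(N+1))^c ≤ 1 - c/(N+1) := by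
      have := rpow_one_add_le_one_add_mul_self (s := -(1/((N:ℝ)+1))) (p := c) (by
        rw [neg_le_neg_iff, div_le_one hN]; linarith [show (0:ℝ) ≤ N by positivity]) h0.le h1.le
      have e : (1 + -(1/((N:ℝ)+1))) = (N:ℝ)/(N+1) := by field_simp; ring
      rw [e] at this
      refine this.trans (le_of_eq (by ring))
    rw [Real.div_rpow (by positivity) hN.le, div_le_iff₀ (by positivity)] at hb
    have e2 : ((N:ℝ)+1)^(c-1) = ((N:ℝ)+1)^c / (N+1) := by rw [Real.rpow_sub_one hN.ne']
    rw [e2]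
    have : (1 - c/((N:ℝ)+1)) * ((N:ℝ)+1)^c = ((N:ℝ)+1)^c - c * (((N:ℝ)+1)^c/(N+1)) := by ring
    rw [this] at hb
    have h3 : (N:ℝ)^c/c ≤ (((N:ℝ)+1)^c - c * (((N:ℝ)+1)^c/(N+1)))/c := by gcongr
    have e4 : (((N:ℝ)+1)^c - c * (((N:ℝ)+1)^c/(N+1)))/c = ((N:ℝ)+1)^c/c - ((N:ℝ)+1)^c/(N+1) := by
      field_simp
    rw [e4] at h3
    have e5 : 1/c * (N:ℝ)^c = (N:ℝ)^c/c := by ring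
    have e6 : 1/c * ((N:ℝ)+1)^c = ((N:ℝ)+1)^c/c := by ring
    linarith

lemma abel_step (c : ℝ) (hc : c ≠ 0) (ε : ℕ → ℝ) (N : ℕ) :
    ∑ k ∈ Finset.range (N+1), kap c k * ε k =
      kap (c+1) N * ε N - ∑ k ∈ Finset.range N, kap (c+1) k * (ε (k+1) - ε k) := by
  induction N with
  | zero => simp [kap_zero]
  | succ N ih =>
    rw [Finset.sum_range_succ, ih, Finset.sum_range_succ, kap_sub c hc N]
    ring

lemma abel (C0 : ℝ) (hC0 : 0 < C0) (n : ℕ) : ∀ c : ℝ, 0 < c + n → c + n < 1 → ∃ C : ℝ, 0 < C ∧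
    ∀ (N : ℕ) (D : ℕ → ℕ → ℝ) (X B : ℝ), 0 < X → 0 ≤ B → (N:ℝ) ≤ X → X ≤ C0*((N:ℝ)-n) →
    (∀ j k, j ≤ n → k + j < N → |D j k| ≤ B / X^j) →
    (∀ j k, j < n → k + j + 1 < N → D (j+1) k = D j (k+1) - D j k) →
    |∑ k ∈ Finset.range N, kap c k * D 0 k| ≤ C * B * X^c := by
  induction n with
  | zero =>
    intro c h0 h1
    simp only [Nat.cast_zero, add_zero] at h0 h1
    obtain ⟨C, hC, hk⟩ := kap_bound c h1
    refine ⟨C/c, by positivity, ?_⟩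
    intro N D X B hX hB hN _ hD _
    calc _ ≤ ∑ k ∈ Finset.range N, (C*B)*((k:ℝ)+1)^(c-1) := by
          refine (Finset.abs_sum_le_sum_abs _ _).trans (Finset.sum_le_sum fun k hk' => ?_)
          rw [abs_mul]
          have := hD 0 k le_rfl (by simpa using hk')
          rw [pow_zero, div_one] at this
          calc _ ≤ (C*((k:ℝ)+1)^(c-1)) * B := mul_le_mul (hk k) this (abs_nonneg _) (by positivity)
            _ = _ := by ring
      _ ≤ (C*B)*(1/c * (N:ℝ)^c) := by
          rw [← Finset.mul_sum]
          exact mul_le_mul_of_nonneg_left (sum_rpow_le c h0 h1 N) (by positivity)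
      _ ≤ (C*B)*(1/c * X^c) := by gcongr
      _ = _ := by ring
  | succ n ih =>
    intro c h0 h1
    push_cast at h0 h1
    have hn : (0:ℝ) ≤ n := by positivity
    have hc : c < 0 := by linarith
    obtain ⟨C1, hC1, hk⟩ := kap_bound (c+1) (by linarith)
    obtain ⟨C2, hC2, h2⟩ := ih (c+1) (by linarith) (by linarith)
    refine ⟨C1 * C0^(-c) + C2, by positivity, ?_⟩
    intro N D X B hX hB hN hXN hD hr
    push_cast at hXN
    have hNpos : (0:ℝ) < (N:ℝ) - (n+1) := by
      by_contra h
      push Not at h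
      nlinarith
    have hN1 : n + 1 < N := by
      have : ((n+1:ℕ):ℝ) < N := by push_cast; linarith
      exact_mod_cast this
    obtain ⟨N', rfl⟩ : ∃ N', N = N'+1 := ⟨N-1, by omega⟩
    rw [abel_step c hc.ne (D 0) N']
    push_cast at hN hXN hNpos
    have b2 := h2 N' (fun j k => D (j+1) k) X (B/X) hX (by positivity) (by linarith)
      (by refine hXN.trans (le_of_eq (by ring))) (by
        intro j k hj hk
        have := hD (j+1) k (by omega) (by omega)
        rwa [pow_succ', ← div_div] at this) (by
        intro j k hj hk
        exact hr (j+1) k (by omega) (by omega))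
    have e : ∑ k ∈ Finset.range N', kap (c+1) k * (D 0 (k+1) - D 0 k) =
        ∑ k ∈ Finset.range N', kap (c+1) k * D (0+1) k := by
      apply Finset.sum_congr rfl
      intro k hk
      rw [hr 0 k (by omega) (by have := Finset.mem_range.mp hk; omega)]
    rw [e]
    have b1 : |kap (c+1) N' * D 0 N'| ≤ C1 * C0^(-c) * B * X^c := by
      rw [abs_mul]
      have d := hD 0 N' (by omega) (by omega)
      rw [pow_zero, div_one] at d
      have k1 := hk N'
      rw [add_sub_cancel_right] at k1
      have k2 : ((N':ℝ)+1)^c ≤ C0^(-c) * X^c := by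
        have : (X/C0)^c = C0^(-c) * X^c := by
          rw [Real.div_rpow hX.le hC0.le, Real.rpow_neg hC0.le]; field_simp
        rw [← this]
        apply Real.rpow_le_rpow_of_nonpos (by positivity) _ hc.le
        rw [div_le_iff₀ hC0]
        nlinarith
      calc _ ≤ (C1 * (C0^(-c) * X^c)) * B := by
            apply mul_le_mul (k1.trans (by gcongr)) d (abs_nonneg _) (by positivity)
        _ = _ := by ring
    have e3 : C2 * (B/X) * X^(c+1) = C2 * B * X^c := by
      rw [Real.rpow_add_one hX.ne']; field_simp
    rw [e3] at b2
    refine (abs_sub _ _).trans ((add_le_add b1 b2).trans (le_of_eq (by ring)))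

end KS

namespace KS
open MeasureTheory

lemma kap_var (c : ℝ) (hc : c < 1) : ∃ C : ℝ, 0 < C ∧ ∀ (p l : ℕ) (Y : ℝ), 0 < Y → Y ≤ (p:ℝ)+1 →
    |kap c (p+l) - kap c p| ≤ l * (C * Y^(c-2)) := by
  obtain ⟨C, hC, h⟩ := kap_diff c hc
  refine ⟨C, hC, fun p l Y hY hp => ?_⟩
  induction l with
  | zero => simp
  | succ l ih =>
    have h1 := h (p+l)
    have h2 : (((p+l:ℕ):ℝ)+1)^(c-2) ≤ Y^(c-2) := by
      apply Real.rpow_le_rpow_of_nonpos hY _ (by linarith)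
      push_cast
      linarith [show (0:ℝ) ≤ l by positivity]
    have h3 : C * (((p+l:ℕ):ℝ)+1)^(c-2) ≤ C * Y^(c-2) := by gcongr
    have e : kap c (p+(l+1)) - kap c p = (kap c (p+l+1) - kap c (p+l)) + (kap c (p+l) - kap c p) := by
      rw [← add_assoc]; ring
    rw [e]
    refine (abs_add_le _ _).trans ?_
    push_cast
    push_cast at h1 h3
    linarith

set_option maxHeartbeats 1000000 in
lemma disc (c : ℝ) (hc : c < 1) (n : ℕ) (hn0 : 0 < c + n) (hn1 : c + n < 1) : ∃ C : ℝ, 0 < C ∧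
    ∀ (x D : ℝ) (m : ℕ) (e : ℕ → ℝ) (E : ℕ → ℕ → ℝ), 8*n+100 ≤ x → 0 < D → |(m:ℝ) - x| ≤ x/4 →
    (∀ i : ℕ, |e i| ≤ D/((i:ℝ)+1)) → (∀ i : ℕ, |e i| ≤ D*(1/((i:ℝ)+1)^2 + x/((i:ℝ)+1)^3)) →
    (∀ i j : ℕ, j ≤ n → |E i j| ≤ D*(1/((i:ℝ)+1)^(j+2) + x/((i:ℝ)+1)^(j+3))) →
    (∀ i j : ℕ, E i (j+1) = E i j - E (i+1) j) →
    (∀ M : ℕ, ∑ i ∈ Finset.range M, |e i - E i 0| ≤ D * x^(-(1/2):ℝ)) →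
    Summable (fun i => kap c (m+i) * e i) ∧
    |∑' i, kap c (m+i) * e i - ∑ k ∈ Finset.range m, kap c k * E (m-1-k) 0| ≤ C * D * x^(c-3/2) := by
  obtain ⟨C1, hC1, hk⟩ := kap_bound c hc
  obtain ⟨C2, hC2, hv⟩ := kap_var c hc
  obtain ⟨C4, hC4, hab⟩ := abel 4 (by norm_num) n c hn0 hn1
  set K1 : ℝ := (1/4:ℝ)^(c-1) with hK1
  set K2 : ℝ := (1/4:ℝ)^(c-2) with hK2
  have hK1p : 0 < K1 := by positivity
  have hK2p : 0 < K2 := by positivity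
  refine ⟨C2*K2*12 + C1*K1 + C1*K1*5*4 + C4*(5*4^(n+2)), by positivity, ?_⟩
  intro x D m e E hx hD hm he1 he2 hE hrec hW
  have hn : (0:ℝ) ≤ n := by positivity
  have hx0 : 0 < x := by linarith
  obtain ⟨hm1, hm2⟩ := abs_le.mp hm
  obtain ⟨M, N, rfl, hMN⟩ : ∃ M N : ℕ, m = N + M ∧ (N = M ∨ N = M + 1) :=
    ⟨m/2, m - m/2, by omega, by omega⟩
  push_cast at hm1 hm2
  have hMN' : (M:ℝ) ≤ N ∧ (N:ℝ) ≤ M + 1 := by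
    constructor
    · have : M ≤ N := by omega
      exact_mod_cast this
    · have : N ≤ M + 1 := by omega
      exact_mod_cast this
  obtain ⟨hMN1, hMN2⟩ := hMN'
  have hM1 : x/4 ≤ M := by linarith
  have hM2 : (M:ℝ) ≤ x := by linarith
  have hN2 : (N:ℝ) ≤ x := by linarith
  have hN1 : x ≤ 4*((N:ℝ) - n) := by linarith
  have hMpos : 0 < M := by
    have : (0:ℝ) < M := by linarith
    exact_mod_cast this
  have hr1 : (x/4)^(c-1) = K1 * x^(c-1) := by
    rw [hK1, ← Real.mul_rpow (by norm_num) hx0.le]; congr 1; ring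
  have hr2 : (x/4)^(c-2) = K2 * x^(c-2) := by
    rw [hK2, ← Real.mul_rpow (by norm_num) hx0.le]; congr 1; ring
  have hkb : ∀ k : ℕ, x/4 ≤ (k:ℝ)+1 → |kap c k| ≤ C1 * (K1 * x^(c-1)) := by
    intro k h
    rw [← hr1]
    refine (hk k).trans (mul_le_mul_of_nonneg_left ?_ hC1.le)
    exact Real.rpow_le_rpow_of_nonpos (by positivity) h (by linarith)
  have hle : x^(c-2) ≤ x^(c-3/2) := Real.rpow_le_rpow_of_exponent_le (by linarith) (by linarith)
  -- tail
  have hxe : ∀ (i j : ℕ), x/4 ≤ (i:ℝ)+1 → 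
      D*(1/((i:ℝ)+1)^(j+2) + x/((i:ℝ)+1)^(j+3)) ≤ 5*D*(1/((i:ℝ)+1)^(j+2)) := by
    intro i j h
    have : x/((i:ℝ)+1)^(j+3) ≤ 4 * (1/((i:ℝ)+1)^(j+2)) := by
      rw [mul_one_div, div_le_div_iff₀ (by positivity) (by positivity), pow_succ _ (j+2)]
      have : 0 < ((i:ℝ)+1)^(j+2) := by positivity
      nlinarith
    nlinarith
  have hE3 := sum_E3 (C1*(K1*x^(c-1))*(5*D)) (by positivity) M hMpos
    (fun i => kap c (N+M+(i+M)) * e (i+M)) (by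
      intro i
      have hi : (0:ℝ) ≤ i := by positivity
      rw [abs_mul]
      have a1 := hkb (N+M+(i+M)) (by push_cast; linarith)
      have a2 := (he2 (i+M)).trans (hxe (i+M) 0 (by push_cast; linarith))
      calc _ ≤ (C1*(K1*x^(c-1))) * (5*D*(1/(((i+M:ℕ):ℝ)+1)^(0+2))) := 
            mul_le_mul a1 a2 (abs_nonneg _) (by positivity)
        _ = _ := by push_cast; rw [show (M:ℝ) + (i+1) = i+M+1 by ring]; ring)
  obtain ⟨hsum, htail⟩ := hE3
  have hsumm : Summable (fun i => kap c (N+M+i) * e i) := (summable_nat_add_iff M).mp hsum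
  refine ⟨hsumm, ?_⟩
  have htail' : |∑' i, kap c (N+M+(i+M)) * e (i+M)| ≤ C1*K1*5*4 * D * x^(c-3/2) := by
    refine htail.trans ?_
    calc _ ≤ C1*(K1*x^(c-1))*(5*D)/(x/4) := by gcongr
      _ = C1*K1*5*4*D*(x^(c-1)/x) := by field_simp
      _ = C1*K1*5*4*D*x^(c-2) := by rw [← Real.rpow_sub_one hx0.ne']; ring_nf
      _ ≤ _ := by gcongr
  -- abel part
  have hE4 : |∑ k ∈ Finset.range N, kap c k * E (N+M-1-k) 0| ≤ C4*(5*4^(n+2)) * D * x^(c-3/2) := by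
    have := hab N (fun j k => E (N+M-1-k-j) j) x (5*D*4^(n+2)/x^2) hx0 (by positivity) hN2 hN1 (by
      intro j k hj hkj
      have hi : M + 1 ≤ (N+M-1-k-j) + 1 := by omega
      have hi' : (M:ℝ) + 1 ≤ ((N+M-1-k-j : ℕ):ℝ) + 1 := by exact_mod_cast hi
      have hi2 : x/4 ≤ ((N+M-1-k-j : ℕ):ℝ) + 1 := by linarith
      refine (hE _ j hj).trans ((hxe _ j hi2).trans ?_)
      calc _ ≤ 5*D*(1/(x/4)^(j+2)) := by gcongr
        _ = 5*D*4^(j+2)/x^2/x^j := by rw [div_pow, pow_add x]; field_simp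
        _ ≤ _ := by
          gcongr
          norm_num) (by
      intro j k hj hkj
      have e1 : N+M-1-(k+1)-j = N+M-1-k-(j+1) := by omega
      have e2 : N+M-1-k-j = N+M-1-k-(j+1)+1 := by omega
      simp only [e1]
      rw [e2]; exact hrec _ _)
    simp only [Nat.sub_zero] at this
    refine this.trans ?_
    have e5 : C4 * (5*D*4^(n+2)/x^2) * x^c = C4*(5*4^(n+2))*D * x^(c-2) := by
      rw [Real.rpow_sub hx0, Real.rpow_two]
      field_simp
    rw [e5]
    gcongr
  -- middle part
  have hE1 : |∑ i ∈ Finset.range M, (kap c (N+M+i) - kap c (N+M-1-i)) * e i| ≤ C2*K2*12 * D * x^(c-3/2) := by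
    have hs := sum_E1 x D hx0 hD e M hM2 he1 he2
    calc _ ≤ ∑ i ∈ Finset.range M, (C2*(K2*x^(c-2))) * ((2*(i:ℝ)+1)*|e i|) := by
          refine (Finset.abs_sum_le_sum_abs _ _).trans (Finset.sum_le_sum fun i hi => ?_)
          have hi := Finset.mem_range.mp hi
          rw [abs_mul]
          have h1 := hv (N+M-1-i) (2*i+1) (x/4) (by positivity) (by
            have : N ≤ N+M-1-i+1 := by omega
            have : (N:ℝ) ≤ ((N+M-1-i:ℕ):ℝ)+1 := by exact_mod_cast this
            linarith)
          rw [hr2, show N+M-1-i+(2*i+1) = N+M+i by omega] at h1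
          push_cast at h1
          calc _ ≤ _ := mul_le_mul_of_nonneg_right h1 (abs_nonneg _)
            _ = _ := by ring
      _ ≤ (C2*(K2*x^(c-2))) * (12*D*Real.sqrt x) := by
          rw [← Finset.mul_sum]; exact mul_le_mul_of_nonneg_left hs (by positivity)
      _ = C2*K2*12*D*(x^(c-2)*x^(1/2:ℝ)) := by rw [Real.sqrt_eq_rpow]; ring
      _ = _ := by rw [← Real.rpow_add hx0]; ring_nf
  have hE2 : |∑ i ∈ Finset.range M, kap c (N+M-1-i) * (e i - E i 0)| ≤ C1*K1 * D * x^(c-3/2) := by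
    calc _ ≤ ∑ i ∈ Finset.range M, (C1*(K1*x^(c-1))) * |e i - E i 0| := by
          refine (Finset.abs_sum_le_sum_abs _ _).trans (Finset.sum_le_sum fun i hi => ?_)
          have hi := Finset.mem_range.mp hi
          rw [abs_mul]
          refine mul_le_mul_of_nonneg_right (hkb _ ?_) (abs_nonneg _)
          have : N ≤ N+M-1-i+1 := by omega
          have : (N:ℝ) ≤ ((N+M-1-i:ℕ):ℝ)+1 := by exact_mod_cast this
          linarith
      _ ≤ (C1*(K1*x^(c-1))) * (D * x^(-(1/2):ℝ)) := by
          rw [← Finset.mul_sum]; exact mul_le_mul_of_nonneg_left (hW M) (by positivity)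
      _ = C1*K1*D*(x^(c-1)*x^(-(1/2):ℝ)) := by ring
      _ = _ := by rw [← Real.rpow_add hx0]; ring_nf
  have split1 := hsumm.sum_add_tsum_nat_add M
  have split2 : ∑ k ∈ Finset.range (N+M), kap c k * E (N+M-1-k) 0 =
      ∑ k ∈ Finset.range N, kap c k * E (N+M-1-k) 0 + ∑ i ∈ Finset.range M, kap c (N+M-1-i) * E i 0 := by
    rw [Finset.sum_range_add]
    congr 1
    rw [← Finset.sum_range_reflect]
    apply Finset.sum_congr rfl
    intro i hi
    have hi := Finset.mem_range.mp hi
    rw [show N + (M-1-i) = N+M-1-i by omega, show N+M-1-(N+M-1-i) = i by omega]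
  have split3 : ∑ i ∈ Finset.range M, kap c (N+M+i) * e i - ∑ i ∈ Finset.range M, kap c (N+M-1-i) * E i 0
      = ∑ i ∈ Finset.range M, (kap c (N+M+i) - kap c (N+M-1-i)) * e i +
        ∑ i ∈ Finset.range M, kap c (N+M-1-i) * (e i - E i 0) := by
    rw [← Finset.sum_sub_distrib, ← Finset.sum_add_distrib]
    apply Finset.sum_congr rfl
    intro i _; ring
  rw [← split1, split2]
  have e6 : ∀ p q r s : ℝ, p + q - (r + s) = (p - s) + (q - r) := fun p q r s => by ring
  rw [e6, split3]
  have e7 : (C2*K2*12 + C1*K1 + C1*K1*5*4 + C4*(5*4^(n+2))) * D * x^(c-3/2) =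
      C2*K2*12 * D * x^(c-3/2) + C1*K1 * D * x^(c-3/2) +
        (C1*K1*5*4 * D * x^(c-3/2) + C4*(5*4^(n+2)) * D * x^(c-3/2)) := by ring
  rw [e7]
  exact (abs_add_le _ _).trans (add_le_add ((abs_add_le _ _).trans (add_le_add hE1 hE2))
    ((abs_sub _ _).trans (add_le_add htail' hE4)))

end KS

namespace KS
open MeasureTheory

lemma exists_shift (a : ℝ) (ha : 0 < a) (hai : ∀ n : ℤ, a ≠ n) :
    ∃ n : ℕ, 0 < 1 - a + n ∧ 1 - a + n < 1 := by
  refine ⟨⌊a⌋.toNat, ?_⟩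
  have h : ((⌊a⌋.toNat : ℕ):ℝ) = (⌊a⌋:ℝ) := by
    have : ((⌊a⌋.toNat : ℕ):ℤ) = ⌊a⌋ := Int.toNat_of_nonneg (Int.floor_nonneg.mpr ha.le)
    exact_mod_cast this
  rw [h]
  have h1 := Int.floor_le a
  have h2 := Int.lt_floor_add_one a
  have h3 : (⌊a⌋:ℝ) ≠ a := fun h => hai _ h.symm
  have h4 := lt_of_le_of_ne h1 h3
  constructor <;> linarith

set_option maxHeartbeats 1000000 in
lemma main_est (a b K : ℝ) (ha : 0 < a) (hai : ∀ n : ℤ, a ≠ n) (hK : 0 ≤ K)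
    (hb : ∀ n : ℕ, b ≠ -(n:ℝ)) (hA : ∀ n : ℕ, b - a ≠ -(n:ℝ)) :
    ∃ C X0 : ℝ, 0 < C ∧ ∀ x ≥ X0, ∀ m : ℕ, |(m:ℝ) - x| ≤ K →
    |Real.exp x * (Real.Gamma (b-a) * Real.Gamma a * G m a b x) - f (1-a) (1/2-m)| ≤
      C * x^((1-a)-3/2) := by
  obtain ⟨n, hn0, hn1⟩ := exists_shift a ha hai
  have hc : 1 - a < 1 := by linarith
  set c := 1 - a with hcdef
  obtain ⟨C, hC, hdisc⟩ := disc c hc n hn0 hn1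
  set R := |b-a| + K + 2 with hR
  have hR1 : 1 ≤ R := by have := abs_nonneg (b-a); linarith
  obtain ⟨CU, hCU, hUV⟩ := UV_bound R hR1
  obtain ⟨CW, hCW, hW⟩ := W_sum R hR1
  obtain ⟨Cm, hCm, hm1⟩ := mom_bound1
  choose Cj hCj hm2 using mom_bound2
  set S := ∑ j ∈ Finset.range (n+1), Cj j with hS
  have hSj : ∀ j, j ≤ n → Cj j ≤ S := fun j hj =>
    Finset.single_le_sum (f := Cj) (fun i _ => (hCj i).le) (Finset.mem_range.mpr (by omega))
  have hSp : 0 < S := lt_of_lt_of_le (hCj 0) (hSj 0 (by omega))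
  set D := Cm*CU + S*CU + CW with hD
  have hDp : 0 < D := by positivity
  refine ⟨C*D, 8*n+100+4*(3*R+1)+4*K, by positivity, ?_⟩
  intro x hx m hmx
  have hn : (0:ℝ) ≤ n := by positivity
  have hx0 : 0 < x := by linarith
  have hxR : 4*(3*R+1) ≤ x := by linarith
  obtain ⟨k1, k2⟩ := abs_le.mp hmx
  obtain ⟨l1, l2⟩ := abs_le.mp (le_refl |b-a|)
  set r := b-a+m-x-1 with hr
  have hrR : |r| ≤ R := by rw [abs_le]; constructor <;> linarith
  have hsR : |-r-1| ≤ R := by rw [abs_le]; constructor <;> linarith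
  have hU := fun t h0 h1 => hUV x r t hxR hrR h0 h1 (hp x t) (hp_pos x t) le_rfl (hq_le_hp x t hx0 h0 h1)
  have hV := fun t h0 h1 => hUV x (-r-1) t hxR hsR h0 h1 (hq x t) (hq_pos x t) (hq_le_hp x t hx0 h0 h1) le_rfl
  have hU1 : ∀ t, 0 < t → t < 1 → |U x r t| ≤ CU * t^(-(1/2):ℝ) := fun t h0 h1 => (hU t h0 h1).2
  have hV1 : ∀ t, 0 < t → t < 1 → |V x (-r-1) t| ≤ CU * t^(-(1/2):ℝ) := fun t h0 h1 => (hV t h0 h1).2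
  obtain ⟨hsum, hbd⟩ := hdisc x D m (fun i => mom (U x r) i 0) (fun i j => mom (V x (-r-1)) i j)
    (by linarith) hDp (hmx.trans (by linarith))
    (by
      intro i
      refine (hm1 _ CU hCU hU1 i).trans ?_
      gcongr
      have : 0 < S*CU := by positivity
      linarith)
    (by
      intro i
      refine (hm2 0 _ CU x hCU hx0 (fun t h0 h1 => (hU t h0 h1).1) i).trans ?_
      apply mul_le_mul_of_nonneg_right _ (by positivity)
      have : Cj 0 * CU ≤ S*CU := mul_le_mul_of_nonneg_right (hSj 0 (by omega)) hCU.le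
      have : 0 < Cm*CU := by positivity
      linarith)
    (by
      intro i j hj
      refine (hm2 j _ CU x hCU hx0 (fun t h0 h1 => (hV t h0 h1).1) i).trans ?_
      apply mul_le_mul_of_nonneg_right _ (by positivity)
      have : Cj j * CU ≤ S*CU := mul_le_mul_of_nonneg_right (hSj j hj) hCU.le
      have : 0 < Cm*CU := by positivity
      linarith)
    (fun i j => mom_rec _ CU (V_meas _ _) hV1 i j)
    (by
      intro M
      refine (hW x r (-r-1) CU hxR hrR hsR hU1 hV1 M).trans ?_
      apply mul_le_mul_of_nonneg_right _ (by positivity)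
      have : 0 < Cm*CU := by positivity
      have : 0 < S*CU := by positivity
      linarith)
  refine le_trans (le_of_eq ?_) hbd
  congr 1
  have hhalf : ∀ k : ℕ, (1/2 - (m:ℝ)) ≠ -(k:ℝ) := by
    intro k h
    have h2 : (1:ℝ) + 2*k = 2*m := by linarith
    have h3 : 1 + 2*k = 2*m := by exact_mod_cast h2
    omega
  have hfs := f_summable c (1/2-m) hc hhalf
  have hf := hfs.sum_add_tsum_nat_add m
  rw [G_eq m a b x ha hx0 hb hA (by linarith), f, ← hf]
  have hfs' : Summable (fun i : ℕ => kap c (m+i) * (1/((i:ℝ)+1/2))) := by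
    refine ((summable_nat_add_iff m).mpr hfs).congr (fun i => ?_)
    rw [add_comm m i]; push_cast
    rw [show (1/2 - (m:ℝ) + (i+m)) = i + 1/2 by ring]; ring
  have e1 : ∑' i : ℕ, kap c (m+i) * P x (b-a+m+i) =
      ∑' i : ℕ, kap c (m+i) * mom (U x r) i 0 + ∑' i : ℕ, kap c (i+m) / (1/2 - (m:ℝ) + ((i+m:ℕ):ℝ)) := by
    have e2 : ∑' i : ℕ, kap c (i+m) / (1/2 - (m:ℝ) + ((i+m:ℕ):ℝ)) = ∑' i : ℕ, kap c (m+i) * (1/((i:ℝ)+1/2)) := by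
      congr 1; ext i
      rw [add_comm m i]; push_cast
      rw [show (1/2 - (m:ℝ) + (i+m)) = i + 1/2 by ring]; ring
    rw [e2, ← hsum.tsum_add hfs']
    congr 1; ext i
    have := P_mom x r CU hU1 i
    rw [show r + 1 + x + i = b-a+m+i by rw [hr]; ring] at this
    rw [← this]; ring
  have e3 : ∑ k ∈ Finset.range m, kap c k * Q x (b-a+k) =
      ∑ k ∈ Finset.range m, kap c k * mom (V x (-r-1)) (m-1-k) 0 -
      ∑ k ∈ Finset.range m, kap c k / (1/2 - (m:ℝ) + k) := by
    rw [← Finset.sum_sub_distrib]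
    apply Finset.sum_congr rfl
    intro k hk
    have hk := Finset.mem_range.mp hk
    have := Q_mom x (-r-1) CU hV1 (m-1-k)
    have hcast : ((m-1-k:ℕ):ℝ) = m - 1 - k := by
      rw [Nat.cast_sub (by omega), Nat.cast_sub (by omega)]; simp
    rw [hcast, show x - (-r-1) - 1 - ((m:ℝ)-1-k) = b-a+k by rw [hr]; ring] at this
    rw [← this, show (m:ℝ)-1-k+1/2 = -(1/2-m+k) by ring, one_div, inv_neg]
    ring
  rw [e1, e3]
  ring

lemma f_val (c : ℝ) (hc : c < 1) (m : ℕ) (hm : 0 < m + c - 1/2) :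
    f c (1/2-m) = Real.cos (Real.pi * (1-c)) * Real.Gamma (1-c) * (Real.Gamma (m+c-1/2) / Real.Gamma (m+1/2)) := by
  have hhalf : ∀ k : ℕ, (1/2 - (m:ℝ)) ≠ -(k:ℝ) := by
    intro k h
    have h2 : (1:ℝ) + 2*k = 2*m := by linarith
    have h3 : 1 + 2*k = 2*m := by exact_mod_cast h2
    omega
  rw [f_eq c _ hc hhalf]
  have h1 := Real.Gamma_mul_Gamma_one_sub (m+1/2)
  have h2 := Real.Gamma_mul_Gamma_one_sub (m+c-1/2)
  rw [show 1 - ((m:ℝ)+1/2) = 1/2 - m by ring] at h1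
  rw [show 1 - ((m:ℝ)+c-1/2) = 1/2 - m + 1 - c by ring] at h2
  have s1 : Real.sin (Real.pi * ((m:ℝ)+1/2)) = (-1)^m := by
    rw [show Real.pi * ((m:ℝ)+1/2) = Real.pi/2 + m*Real.pi by ring, Real.sin_add_nat_mul_pi]; simp
  have s2 : Real.sin (Real.pi * ((m:ℝ)+c-1/2)) = (-1)^m * Real.cos (Real.pi*(1-c)) := by
    rw [show Real.pi * ((m:ℝ)+c-1/2) = (Real.pi/2 - Real.pi*(1-c)) + m*Real.pi by ring,
      Real.sin_add_nat_mul_pi, Real.sin_pi_div_two_sub]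
  rw [s1] at h1
  rw [s2] at h2
  have g1 : Real.Gamma (m+1/2) ≠ 0 := (Real.Gamma_pos_of_pos (by positivity)).ne'
  have g2 : Real.Gamma (m+c-1/2) ≠ 0 := (Real.Gamma_pos_of_pos hm).ne'
  have hs : ((-1:ℝ)^m) ≠ 0 := pow_ne_zero _ (by norm_num)
  have h1' : Real.Gamma (1/2-m) = Real.pi / (-1)^m / Real.Gamma (m+1/2) := by
    rw [eq_div_iff g1, ← h1]; ring
  have h2' : Real.Gamma (1/2-m+1-c) = Real.pi / ((-1)^m * Real.cos (Real.pi*(1-c))) / Real.Gamma (m+c-1/2) := by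
    rw [eq_div_iff g2, ← h2]; ring
  rw [h1', h2']
  have := Real.pi_pos.ne'
  by_cases hcos : Real.cos (Real.pi*(1-c)) = 0
  · rw [hcos]; simp
  · field_simp

end KS

namespace KS
open MeasureTheory

lemma ratio_base (σ y : ℝ) (h0 : 0 ≤ σ) (h1 : σ ≤ 1) (hy : 1 ≤ y) :
    |Real.Gamma (y+σ) / Real.Gamma y - y^σ| ≤ y^(σ-1) := by
  have hy0 : 0 < y := by linarith
  have gy := Real.Gamma_pos_of_pos hy0
  have gys : 0 < Real.Gamma (y+σ) := Real.Gamma_pos_of_pos (by linarith)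
  rcases eq_or_lt_of_le h0 with rfl | h0
  · simp [gy.ne']; positivity
  rcases eq_or_lt_of_le h1 with rfl | h1
  · rw [Real.Gamma_add_one hy0.ne']; simp [gy.ne']
  have up : Real.Gamma (y+σ) / Real.Gamma y ≤ y^σ := by
    have := Real.Gamma_mul_add_mul_le_rpow_Gamma_mul_rpow_Gamma (s := y) (t := y+1) (a := 1-σ) (b := σ)
      hy0 (by linarith) (by linarith) h0 (by ring)
    rw [show (1-σ)*y + σ*(y+1) = y+σ by ring, Real.Gamma_add_one hy0.ne', Real.mul_rpow hy0.le gy.le] at this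
    rw [div_le_iff₀ gy]
    refine this.trans (le_of_eq ?_)
    rw [mul_left_comm, ← Real.rpow_add gy]; simp
  have low : y^σ * (1 - 1/y) ≤ Real.Gamma (y+σ) / Real.Gamma y := by
    have := Real.Gamma_mul_add_mul_le_rpow_Gamma_mul_rpow_Gamma (s := y+σ) (t := y+σ+1) (a := σ) (b := 1-σ)
      (by linarith) (by linarith) h0 (by linarith) (by ring)
    have hys : 0 < y + σ := by linarith
    rw [show σ*(y+σ) + (1-σ)*(y+σ+1) = y+1 by ring, Real.Gamma_add_one hy0.ne', Real.Gamma_add_one hys.ne',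
      Real.mul_rpow hys.le gys.le, mul_left_comm, ← Real.rpow_add gys] at this
    simp only [add_sub_cancel, Real.rpow_one] at this
    rw [le_div_iff₀ gy]
    have h2 : (y+σ)^(1-σ) ≤ y^(1-σ) * (1 + 1/y) := by
      have e : y + σ = y * (1 + σ/y) := by field_simp
      rw [e, Real.mul_rpow hy0.le (by positivity)]
      apply mul_le_mul_of_nonneg_left _ (by positivity)
      have q1 : 1 ≤ 1 + σ/y := by have : 0 < σ/y := by positivity
                                  linarith
      calc (1+σ/y)^(1-σ) ≤ (1+σ/y)^(1:ℝ) := Real.rpow_le_rpow_of_exponent_le q1 (by linarith)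
        _ = 1 + σ/y := Real.rpow_one _
        _ ≤ _ := by gcongr
    have h3 : y * Real.Gamma y ≤ y^(1-σ) * (1+1/y) * Real.Gamma (y+σ) :=
      this.trans (mul_le_mul_of_nonneg_right h2 gys.le)
    have h4 : y^σ * y^(1-σ) = y := by rw [← Real.rpow_add hy0]; simp
    have hyσ : 0 < y^σ := by positivity
    have h5 : y^σ * Real.Gamma y ≤ (1+1/y) * Real.Gamma (y+σ) := by
      have := mul_le_mul_of_nonneg_left h3 hyσ.le
      have e : y^σ * (y^(1-σ) * (1+1/y) * Real.Gamma (y+σ)) = y * ((1+1/y) * Real.Gamma (y+σ)) := by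
        rw [← mul_assoc, ← mul_assoc, h4]; ring
      rw [e] at this
      have : y * (y^σ * Real.Gamma y) ≤ y * ((1+1/y) * Real.Gamma (y+σ)) := by linarith
      exact le_of_mul_le_mul_left this hy0
    have h6 : 0 ≤ 1 - 1/y := by rw [sub_nonneg, div_le_one hy0]; exact hy
    have h7 := mul_le_mul_of_nonneg_left h5 h6
    have h8 : (1-1/y)*(1+1/y) ≤ 1 := by nlinarith [sq_nonneg (1/y)]
    calc _ = (1-1/y)*(y^σ*Real.Gamma y) := by ring
      _ ≤ _ := h7
      _ = ((1-1/y)*(1+1/y)) * Real.Gamma (y+σ) := by ring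
      _ ≤ 1 * Real.Gamma (y+σ) := mul_le_mul_of_nonneg_right h8 gys.le
      _ = _ := one_mul _
  have e : y^(σ-1) = y^σ * (1/y) := by rw [Real.rpow_sub_one hy0.ne']; ring
  rw [e, abs_le]
  have : 0 < y^σ * (1/y) := by positivity
  constructor
  · linarith
  · linarith

lemma ratio_gen (n : ℕ) : ∀ σ : ℝ, 0 ≤ σ + n → σ + n ≤ 1 → ∃ C Y0 : ℝ, 0 < C ∧ 1 ≤ Y0 ∧ ∀ y ≥ Y0,
    |Real.Gamma (y+σ) / Real.Gamma y - y^σ| ≤ C * y^(σ-1) := by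
  induction n with
  | zero =>
    intro σ h0 h1
    refine ⟨1, 1, one_pos, le_rfl, fun y hy => ?_⟩
    rw [one_mul]
    exact ratio_base σ y (by simpa using h0) (by simpa using h1) hy
  | succ n ih =>
    intro σ h0 h1
    push_cast at h0 h1
    obtain ⟨C, Y0, hC, hY0, h⟩ := ih (σ+1) (by linarith) (by linarith)
    have hs : 0 ≤ |σ| := abs_nonneg σ
    refine ⟨2*C + 2*|σ|, Y0 + 2*|σ|, by positivity, by linarith, fun y hy => ?_⟩
    have hy0 : 0 < y := by linarith
    have hl := neg_abs_le σ
    have hys : y/2 ≤ y + σ := by linarith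
    have hys0 : 0 < y + σ := by linarith
    have h := h y (by linarith)
    rw [← add_assoc, Real.Gamma_add_one hys0.ne', add_sub_cancel_right] at h
    have gy := Real.Gamma_pos_of_pos hy0
    have e : Real.Gamma (y+σ) / Real.Gamma y - y^σ =
        ((y+σ)*Real.Gamma (y+σ) / Real.Gamma y - y^(σ+1) - σ*y^σ)/(y+σ) := by
      rw [Real.rpow_add_one hy0.ne']; field_simp; ring
    rw [e, abs_div, abs_of_pos hys0, div_le_iff₀ hys0]
    have e2 : y^σ = y^(σ-1)*y := by rw [← Real.rpow_add_one hy0.ne']; ring_nf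
    have hp : 0 < y^(σ-1) := by positivity
    calc _ ≤ C*y^σ + |σ| * y^σ := by
          refine (abs_sub _ _).trans (add_le_add h (le_of_eq ?_))
          rw [abs_mul, abs_of_pos (by positivity : 0 < y^σ)]
      _ = (2*C+2*|σ|)*y^(σ-1)*(y/2) := by rw [e2]; ring
      _ ≤ _ := by gcongr

lemma rpow_near (σ K : ℝ) (hK : 0 ≤ K) : ∃ C X0 : ℝ, 0 < C ∧ 1 ≤ X0 ∧ ∀ x ≥ X0, ∀ y, |y - x| ≤ K →
    |y^σ - x^σ| ≤ C * x^(σ-1) := by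
  have hs : 0 ≤ |σ| := abs_nonneg σ
  refine ⟨4*|σ| * K+1, 1 + 2*K + 2*|σ| * K, by positivity, by
    have : 0 ≤ |σ| * K := by positivity
    linarith, fun x hx y hy => ?_⟩
  have hsk : 0 ≤ |σ| * K := by positivity
  have hx0 : 0 < x := by linarith
  obtain ⟨h1, h2⟩ := abs_le.mp hy
  have hyx : x/2 ≤ y := by linarith
  have hy0 : 0 < y := by linarith
  have e : y^σ - x^σ = x^σ * (Real.exp (σ * Real.log (y/x)) - 1) := by
    have : y = x * (y/x) := by field_simp
    nth_rewrite 1 [this]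
    rw [Real.mul_rpow hx0.le (by positivity), Real.rpow_def_of_pos (by positivity : 0 < y/x),
      mul_comm σ]; ring
  have hl : |Real.log (y/x)| ≤ 2*K/x := by
    have hq : 0 < y/x := by positivity
    have u1 := Real.log_le_sub_one_of_pos hq
    have u2 := Real.one_sub_inv_le_log_of_pos hq
    rw [abs_le]; constructor
    · have : 1 - (y/x)⁻¹ = (y-x)/y := by field_simp
      rw [this] at u2
      refine le_trans ?_ u2
      rw [← neg_div, div_le_div_iff₀ hx0 hy0]
      nlinarith
    · refine u1.trans ?_
      have : y/x - 1 = (y-x)/x := by field_simp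
      rw [this]
      gcongr
      linarith
  have hv : |σ * Real.log (y/x)| ≤ |σ| * (2*K/x) := by rw [abs_mul]; gcongr
  have hv1 : |σ| * (2*K/x) ≤ 1 := by
    rw [mul_div_assoc', div_le_one hx0]; linarith
  have := Real.abs_exp_sub_one_le (hv.trans hv1)
  rw [e, abs_mul, abs_of_pos (by positivity : 0 < x^σ)]
  have e2 : x^σ = x^(σ-1)*x := by rw [← Real.rpow_add_one hx0.ne']; ring_nf
  have hp : 0 < x^(σ-1) := by positivity
  calc _ ≤ x^σ * (2*(|σ| * (2*K/x))) := by gcongr; linarith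
    _ = (4*|σ| * K)*x^(σ-1) := by rw [e2]; field_simp; ring
    _ ≤ _ := by gcongr; linarith

lemma ratio_m (a K : ℝ) (ha : 0 < a) (hK : 0 ≤ K) : ∃ C X0 : ℝ, 0 < C ∧ 1 ≤ X0 ∧ ∀ x ≥ X0, ∀ m : ℕ, |(m:ℝ) - x| ≤ K →
    |Real.Gamma (m+(1-a)-1/2) / Real.Gamma (m+1/2) - x^(-a)| ≤ C * x^(-a-1/2) := by
  have h1 := Int.floor_le a
  have h2 := Int.lt_floor_add_one a
  have hcast : ((⌊a⌋.toNat : ℕ):ℝ) = (⌊a⌋:ℝ) := by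
    have : ((⌊a⌋.toNat : ℕ):ℤ) = ⌊a⌋ := Int.toNat_of_nonneg (Int.floor_nonneg.mpr ha.le)
    exact_mod_cast this
  obtain ⟨C1, Y0, hC1, hY0, hr⟩ := ratio_gen (⌊a⌋.toNat+1) (-a) (by push_cast; rw [hcast]; linarith)
    (by push_cast; rw [hcast]; linarith)
  obtain ⟨C2, X0, hC2, hX0, hn⟩ := rpow_near (-a) (K+1) (by linarith)
  refine ⟨C1*(1/2)^(-a-1) + C2, X0 + 2*Y0 + 2*K, by positivity, by linarith, fun x hx m hm => ?_⟩
  have hx0 : 0 < x := by linarith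
  obtain ⟨l1, l2⟩ := abs_le.mp hm
  have r1 := hr ((m:ℝ)+1/2) (by linarith)
  have r2 := hn x (by linarith) ((m:ℝ)+1/2) (by rw [abs_le]; constructor <;> linarith)
  rw [show (m:ℝ)+1/2+-a = m+(1-a)-1/2 by ring] at r1
  have r3 : ((m:ℝ)+1/2)^(-a-1) ≤ (1/2)^(-a-1) * x^(-a-1) := by
    rw [← Real.mul_rpow (by norm_num) hx0.le]
    apply Real.rpow_le_rpow_of_nonpos (by positivity) (by linarith) (by linarith)
  have r4 : x^(-a-1) ≤ x^(-a-1/2) := Real.rpow_le_rpow_of_exponent_le (by linarith) (by linarith)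
  have e : ∀ p q r : ℝ, p - r = (p - q) + (q - r) := fun p q r => by ring
  rw [e _ (((m:ℝ)+1/2)^(-a))]
  refine (abs_add_le _ _).trans ((add_le_add r1 r2).trans ?_)
  calc _ ≤ C1 * ((1/2)^(-a-1) * x^(-a-1)) + C2 * x^(-a-1) := by gcongr
    _ = (C1*(1/2)^(-a-1) + C2) * x^(-a-1) := by ring
    _ ≤ _ := by gcongr

def Est (a b : ℝ) : Prop := ∀ K : ℝ, 0 ≤ K → ∃ C X0 : ℝ, 0 < C ∧ 1 ≤ X0 ∧ ∀ x ≥ X0, ∀ m : ℕ, |(m:ℝ) - x| ≤ K →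
  |G m a b x - x^(-a) * Real.exp (-x) / Real.Gamma (b-a) * Real.cos (Real.pi*a)| ≤
    C * (x^(-a-1/2) * Real.exp (-x))

lemma est_base (a b : ℝ) (ha : 0 < a) (hai : ∀ n : ℤ, a ≠ n)
    (hb : ∀ n : ℕ, b ≠ -(n:ℝ)) (hA : ∀ n : ℕ, b - a ≠ -(n:ℝ)) : Est a b := by
  intro K hK
  obtain ⟨C1, X1, hC1, h1⟩ := main_est a b K ha hai hK hb hA
  obtain ⟨C2, X2, hC2, hX2, h2⟩ := ratio_m a K ha hK
  have gA : Real.Gamma (b-a) ≠ 0 := Real.Gamma_ne_zero hA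
  have ga := Real.Gamma_pos_of_pos ha
  set W := Real.Gamma (b-a) * Real.Gamma a with hW
  have hWn : W ≠ 0 := mul_ne_zero gA ga.ne'
  refine ⟨(C1 + Real.Gamma a * C2)/|W|, |X1| + X2 + K + a + 1, by positivity, by
    have := abs_nonneg X1
    linarith, fun x hx m hm => ?_⟩
  have hx1 : X1 ≤ x := by have := le_abs_self X1; linarith
  have hx2 : X2 ≤ x := by have := abs_nonneg X1; linarith
  have hx0 : 0 < x := by linarith
  obtain ⟨l1, l2⟩ := abs_le.mp hm
  have h1 := h1 x hx1 m hm
  have h2 := h2 x hx2 m hm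
  have := abs_nonneg X1
  rw [f_val (1-a) (by linarith) m (by linarith), sub_sub_cancel, show 1 - a - 3/2 = -a-1/2 by ring] at h1
  set ρ := Real.Gamma (m+(1-a)-1/2) / Real.Gamma (m+1/2)
  have hex : Real.exp x * Real.exp (-x) = 1 := by rw [← Real.exp_add]; simp
  have hE := Real.exp_pos (-x)
  have e : G m a b x - x^(-a) * Real.exp (-x) / Real.Gamma (b-a) * Real.cos (Real.pi*a) =
      Real.exp (-x) * (((Real.exp x * (W * G m a b x) - Real.cos (Real.pi*a) * Real.Gamma a * ρ) +
        Real.cos (Real.pi*a) * Real.Gamma a * (ρ - x^(-a))) / W) := by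
    have : Real.exp (-x) * (((Real.exp x * (W * G m a b x) - Real.cos (Real.pi*a) * Real.Gamma a * ρ) +
        Real.cos (Real.pi*a) * Real.Gamma a * (ρ - x^(-a))) / W) =
        (Real.exp x * Real.exp (-x)) * G m a b x * (W/W) - 
          Real.exp (-x) * Real.cos (Real.pi*a) * x^(-a) * (Real.Gamma a / W) := by ring
    rw [this, hex, div_self hWn, hW]
    field_simp
  rw [e, abs_mul, abs_of_pos hE, abs_div]
  have hcos := Real.abs_cos_le_one (Real.pi*a)
  have hb2 : |Real.cos (Real.pi*a) * Real.Gamma a * (ρ - x^(-a))| ≤ Real.Gamma a * (C2 * x^(-a-1/2)) := by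
    rw [abs_mul, abs_mul, abs_of_pos ga]
    apply mul_le_mul _ h2 (abs_nonneg _) ga.le
    nlinarith
  have h3 := (abs_add_le _ _).trans (add_le_add h1 hb2)
  have hWp : 0 < |W| := abs_pos.mpr hWn
  calc _ ≤ Real.exp (-x) * ((C1 * x^(-a-1/2) + Real.Gamma a * (C2 * x^(-a-1/2)))/|W|) := by gcongr
    _ = _ := by ring

end KS

namespace KS
open MeasureTheory

lemma asc_left (s : ℝ) (n : ℕ) : (ascPochhammer ℝ (n+1)).eval s = s * (ascPochhammer ℝ n).eval (s+1) := by
  rw [ascPochhammer_succ_left]; simp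

lemma asc_shift (s : ℝ) (n : ℕ) : s * (ascPochhammer ℝ n).eval (s+1) = (s+n) * (ascPochhammer ℝ n).eval s := by
  rw [← asc_left, ascPochhammer_succ_eval]; ring

lemma asc_ne (s : ℝ) (hs : ∀ n : ℕ, s ≠ -(n:ℝ)) (n : ℕ) : (ascPochhammer ℝ n).eval s ≠ 0 := by
  have := Gamma_asc s hs n
  intro h
  rw [h, mul_zero] at this
  exact Real.Gamma_ne_zero (shift_ne hs n) this

lemma KR_summable (A b z : ℝ) (hb : ∀ n : ℕ, b ≠ -(n:ℝ)) : Summable (fun n : ℕ =>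
    ((ascPochhammer ℝ n).eval A / (ascPochhammer ℝ n).eval b) * z ^ n / n.factorial) := by
  apply summable_of_ratio_norm_eventually_le (r := 1/2) (by norm_num)
  obtain ⟨N, hN⟩ := exists_nat_ge (2*|A| + 2*|b| + 8*|z| + 1)
  filter_upwards [eventually_ge_atTop N] with n hn
  have hn' : (N:ℝ) ≤ n := by exact_mod_cast hn
  have hA := abs_nonneg A
  have hb' := abs_nonneg b
  have hz := abs_nonneg z
  have hbn : b + n ≠ 0 := fun h => hb n (by linarith)
  have e : ((ascPochhammer ℝ (n+1)).eval A / (ascPochhammer ℝ (n+1)).eval b) * z ^ (n+1) / (n+1).factorial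
    = ((A+n)*z/((b+n)*(n+1))) * (((ascPochhammer ℝ n).eval A / (ascPochhammer ℝ n).eval b) * z ^ n / n.factorial) := by
    rw [ascPochhammer_succ_eval, ascPochhammer_succ_eval, Nat.factorial_succ]
    have := asc_ne b hb n
    have : (n.factorial:ℝ) ≠ 0 := by positivity
    push_cast
    field_simp
    ring
  rw [e, norm_mul]
  apply mul_le_mul_of_nonneg_right _ (norm_nonneg _)
  rw [Real.norm_eq_abs, abs_div, abs_mul, abs_mul]
  have n0 : (0:ℝ) < n := by linarith
  have a1 : |A+n| ≤ 2*n := by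
    refine (abs_add_le _ _).trans ?_
    rw [Nat.abs_cast]; linarith
  have a2 : (n:ℝ)/2 ≤ |b+n| := by
    have := le_abs_self (b+n)
    have := neg_abs_le b
    linarith
  rw [abs_of_pos (by positivity : (0:ℝ) < n+1), div_le_iff₀ (by positivity)]
  calc |A+n| * |z| ≤ (2*n)*|z| := by gcongr
    _ ≤ 1/2*((n:ℝ)/2 * (n+1)) := by nlinarith
    _ ≤ _ := by gcongr

lemma KR_contig (A b z : ℝ) (hb : ∀ n : ℕ, b ≠ -(n:ℝ)) :
    KR A b z = KR A (b+1) z + z*A/(b*(b+1)) * KR (A+1) (b+2) z := by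
  have hb1 : ∀ n : ℕ, b+1 ≠ -(n:ℝ) := by simpa using shift_ne hb 1
  have hb2 : ∀ n : ℕ, b+2 ≠ -(n:ℝ) := by simpa using shift_ne hb 2
  have s0 := KR_summable A b z hb
  have s1 := KR_summable A (b+1) z hb1
  have s2 := KR_summable (A+1) (b+2) z hb2
  have d := s0.hasSum.sub s1.hasSum
  have d2 : HasSum (fun n : ℕ => ((ascPochhammer ℝ n).eval A / (ascPochhammer ℝ n).eval b) * z ^ n / n.factorial
    - ((ascPochhammer ℝ n).eval A / (ascPochhammer ℝ n).eval (b+1)) * z ^ n / n.factorial)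
      (z*A/(b*(b+1)) * KR (A+1) (b+2) z) := by
    rw [← hasSum_nat_add_iff' 1]
    simp only [Finset.range_one, Finset.sum_singleton, ascPochhammer_zero, Polynomial.eval_one, pow_zero,
      sub_self, sub_zero]
    refine (s2.hasSum.mul_left (z*A/(b*(b+1)))).congr_fun ?_
    intro n
    have hb0 : b ≠ 0 := by simpa using hb 0
    have hb10 : b + 1 ≠ 0 := by simpa using hb1 0
    have h1 : (ascPochhammer ℝ (n+1)).eval (b+1) = (b+1) * (ascPochhammer ℝ n).eval (b+2) := by
      rw [asc_left]; ring_nf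
    have h2 : (ascPochhammer ℝ (n+1)).eval b * (b+1+n) = b * ((b+1) * (ascPochhammer ℝ n).eval (b+2)) := by
      rw [asc_left, ← h1, ascPochhammer_succ_eval]; ring
    have hbn : b + 1 + n ≠ 0 := fun h => hb1 n (by linarith)
    have h3 : (ascPochhammer ℝ (n+1)).eval b = b * ((b+1) * (ascPochhammer ℝ n).eval (b+2)) / (b+1+n) := by
      rw [eq_div_iff hbn, h2]
    rw [h1, h3, asc_left, Nat.factorial_succ]
    have := asc_ne (b+2) hb2 n
    have : (n.factorial:ℝ) ≠ 0 := by positivity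
    push_cast
    field_simp
    ring
  have := d.unique d2
  unfold KR at *
  linarith

lemma G_contig (m : ℕ) (a b x : ℝ) (ha : ∀ n : ℤ, a ≠ n) (hx : 0 < x) (hb : ∀ n : ℕ, b ≠ -(n:ℝ)) :
    G m a b x = b * G m (a+1) (b+1) x - x*(b-a) * G m (a+1) (b+2) x := by
  have ha0 : a ≠ 0 := by simpa using ha 0
  have hb0 : b ≠ 0 := by simpa using hb 0
  have hb1 : b + 1 ≠ 0 := by have := hb 1; intro h; apply this; push_cast; linarith
  have gb := Real.Gamma_ne_zero hb
  have ga : Real.Gamma a ≠ 0 := Real.Gamma_ne_zero (fun n => by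
    have := ha (-n); push_cast at this; exact this)
  have g1 : Real.Gamma (b+1) = b * Real.Gamma b := Real.Gamma_add_one hb0
  have g2 : Real.Gamma (b+2) = (b+1) * (b * Real.Gamma b) := by
    rw [show b+2 = b+1+1 by ring, Real.Gamma_add_one hb1, g1]
  have g3 : Real.Gamma (a+1) = a * Real.Gamma a := Real.Gamma_add_one ha0
  unfold G
  rw [KR_contig (b-a) b (-x) hb, g1, g2, g3, show b+1-(a+1) = b-a by ring, show b+2-(a+1) = b-a+1 by ring,
    show a+1-(b+1) = a-b by ring, show a+1-(b+2) = a-b-1 by ring, Real.rpow_sub_one hx.ne',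
    show 1-(a+1) = -a by ring]
  have key : a * ∑ j ∈ Finset.range m, (ascPochhammer ℝ j).eval (b-a) * (ascPochhammer ℝ j).eval (1-a) /
      (j.factorial * x^j) = b * ∑ j ∈ Finset.range m, (ascPochhammer ℝ j).eval (b-a) * (ascPochhammer ℝ j).eval (-a) /
      (j.factorial * x^j) - (b-a) * ∑ j ∈ Finset.range m, (ascPochhammer ℝ j).eval (b-a+1) * (ascPochhammer ℝ j).eval (-a) /
      (j.factorial * x^j) := by
    rw [Finset.mul_sum, Finset.mul_sum, Finset.mul_sum, ← Finset.sum_sub_distrib]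
    apply Finset.sum_congr rfl
    intro j _
    have k1 := asc_shift (b-a) j
    have k2 := asc_shift (-a) j
    rw [show -a+1 = 1-a by ring] at k2
    rw [← mul_div_assoc, ← mul_div_assoc, ← mul_div_assoc, ← sub_div]
    congr 1
    linear_combination (-(ascPochhammer ℝ j).eval (b-a)) * k2 + (ascPochhammer ℝ j).eval (-a) * k1
  set S0 := ∑ j ∈ Finset.range m, (ascPochhammer ℝ j).eval (b-a) * (ascPochhammer ℝ j).eval (1-a) /
      (j.factorial * x^j)
  set S1 := ∑ j ∈ Finset.range m, (ascPochhammer ℝ j).eval (b-a) * (ascPochhammer ℝ j).eval (-a) /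
      (j.factorial * x^j)
  set S2 := ∑ j ∈ Finset.range m, (ascPochhammer ℝ j).eval (b-a+1) * (ascPochhammer ℝ j).eval (-a) /
      (j.factorial * x^j)
  have hS : S0 = (b * S1 - (b-a)*S2)/a := by rw [eq_div_iff ha0, ← key]; ring
  rw [hS]
  field_simp
  ring

lemma est_step (a b : ℝ) (ha : ∀ n : ℤ, a ≠ n) (hb : ∀ n : ℕ, b ≠ -(n:ℝ)) (hA : ∀ n : ℕ, b - a ≠ -(n:ℝ))
    (E1 : Est (a+1) (b+1)) (E2 : Est (a+1) (b+2)) : Est a b := by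
  intro K hK
  obtain ⟨C1, X1, hC1, hX1, h1⟩ := E1 K hK
  obtain ⟨C2, X2, hC2, hX2, h2⟩ := E2 K hK
  have gA : Real.Gamma (b-a) ≠ 0 := Real.Gamma_ne_zero hA
  have hA0 : b - a ≠ 0 := by simpa using hA 0
  refine ⟨|b| * C1 + |b|/|Real.Gamma (b-a)| + |b-a| * C2 + 1, X1+X2, by positivity, by linarith, fun x hx m hm => ?_⟩
  have hx0 : 0 < x := by linarith
  have h1 := h1 x (by linarith) m hm
  have h2 := h2 x (by linarith) m hm
  rw [show b+1-(a+1) = b-a by ring] at h1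
  rw [show b+2-(a+1) = b-a+1 by ring, Real.Gamma_add_one hA0] at h2
  have hcos : Real.cos (Real.pi*(a+1)) = -Real.cos (Real.pi*a) := by
    rw [mul_add, mul_one, Real.cos_add_pi]
  rw [hcos] at h1 h2
  have hcb := Real.abs_cos_le_one (Real.pi*a)
  set E := Real.exp (-x) with hE
  have hEp : 0 < E := Real.exp_pos _
  set co := Real.cos (Real.pi*a)
  have r1 : x^(-(a+1)) = x^(-a)/x := by rw [← Real.rpow_sub_one hx0.ne']; ring_nf
  have r2 : x^(-(a+1)-1/2) = x^(-a-1/2)/x := by rw [← Real.rpow_sub_one hx0.ne']; ring_nf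
  have r3 : x^(-(a+1)) ≤ x^(-a-1/2) := Real.rpow_le_rpow_of_exponent_le (by linarith) (by linarith)
  have r4 : x^(-(a+1)-1/2) ≤ x^(-a-1/2) := Real.rpow_le_rpow_of_exponent_le (by linarith) (by linarith)
  set g1 := G m (a+1) (b+1) x
  set g2 := G m (a+1) (b+2) x
  have e : G m a b x - x^(-a) * E / Real.Gamma (b-a) * co =
      b * (g1 - x^(-(a+1)) * E / Real.Gamma (b-a) * (-co)) - b * (x^(-(a+1)) * E / Real.Gamma (b-a) * co)
        - x*(b-a)*(g2 - x^(-(a+1)) * E / ((b-a)*Real.Gamma (b-a)) * (-co)) := by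
    rw [G_contig m a b x ha hx0 hb, r1]
    field_simp
    ring
  rw [e]
  have p : 0 < x^(-a-1/2) := by positivity
  have p' : 0 < x^(-(a+1)) := by positivity
  have t1 : |b * (g1 - x^(-(a+1)) * E / Real.Gamma (b-a) * (-co))| ≤ |b| * C1*(x^(-a-1/2)*E) := by
    rw [abs_mul, mul_assoc]
    gcongr
    refine h1.trans ?_
    gcongr
  have t2 : |b * (x^(-(a+1)) * E / Real.Gamma (b-a) * co)| ≤ |b|/|Real.Gamma (b-a)| * (x^(-a-1/2)*E) := by
    rw [abs_mul, abs_mul, abs_div, abs_of_pos (mul_pos p' hEp)]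
    calc _ ≤ |b| * (x^(-a-1/2)*E/|Real.Gamma (b-a)| * 1) := by gcongr
      _ = _ := by ring
  have t3 : |x*(b-a)*(g2 - x^(-(a+1)) * E / ((b-a)*Real.Gamma (b-a)) * (-co))| ≤ |b-a| * C2*(x^(-a-1/2)*E) := by
    rw [abs_mul, abs_mul, abs_of_pos hx0]
    calc _ ≤ x * |b-a| * (C2*(x^(-(a+1)-1/2)*E)) := by gcongr
      _ = _ := by rw [r2]; field_simp
  refine (abs_sub _ _).trans ((add_le_add ((abs_sub _ _).trans (add_le_add t1 t2)) t3).trans ?_)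
  have : 0 < x^(-a-1/2)*E := mul_pos p hEp
  nlinarith

lemma est_all (n : ℕ) : ∀ a b : ℝ, 0 < a + n → (∀ n : ℤ, a ≠ n) → (∀ n : ℕ, b ≠ -(n:ℝ)) →
    (∀ n : ℕ, b - a ≠ -(n:ℝ)) → Est a b := by
  induction n with
  | zero => intro a b h0 ha hb hA; exact est_base a b (by simpa using h0) ha hb hA
  | succ n ih =>
    intro a b h0 ha hb hA
    push_cast at h0
    have ha1 : ∀ n : ℤ, a + 1 ≠ n := fun n h => ha (n-1) (by push_cast; linarith)
    apply est_step a b ha hb hA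
    · apply ih _ _ (by linarith) ha1
      · simpa using shift_ne hb 1
      · intro k; rw [show b+1-(a+1) = b-a by ring]; exact hA k
    · apply ih _ _ (by linarith) ha1
      · simpa using shift_ne hb 2
      · intro k; rw [show b+2-(a+1) = b-a+1 by ring]; simpa using shift_ne hA 1 k

lemma asc_cast (n : ℕ) (s : ℝ) : (ascPochhammer ℂ n).eval (s:ℂ) = (((ascPochhammer ℝ n).eval s : ℝ) : ℂ) := by
  induction n with
  | zero => simp
  | succ n ih => rw [ascPochhammer_succ_eval, ascPochhammer_succ_eval, ih]; push_cast; rfl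

lemma kummer_cast (A b z : ℝ) :
    ∑' n : ℕ, ((ascPochhammer ℂ n).eval (A:ℂ) / (ascPochhammer ℂ n).eval (b:ℂ)) * (z:ℂ) ^ n / n.factorial
      = ((KR A b z : ℝ) : ℂ) := by
  rw [KR, Complex.ofReal_tsum]
  congr 1; ext n
  rw [asc_cast, asc_cast]; push_cast; rfl

end KS

/-- On the Stokes line `arg z = π`: after subtracting the optimally truncated dominant
algebraic expansion (truncation index `m₀(x) = ⌊x + 2a − b⌋`) from `₁F₁(b−a;b;−x)/Γ(b)`,
the exponentially small contribution is `(x^{−a} e^{−x}/Γ(b−a)) (cos(πa) + O(x^{−1/2}))`. -/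
theorem kummer_stokes_line_exponentially_small (a b : ℝ)
    (ha : ∀ n : ℤ, a ≠ (n : ℝ)) (hb : ∀ n : ℕ, b ≠ -(n : ℝ)) (hba : ∀ n : ℕ, b - a ≠ -(n : ℝ)) :
    (fun x : ℝ =>
        ((1 / Complex.Gamma (b : ℂ)) * kummer ((b : ℂ) - (a : ℂ)) (b : ℂ) (-(x : ℂ)) -
            ((x : ℂ) ^ ((a : ℂ) - (b : ℂ)) / Complex.Gamma (a : ℂ)) *
              ∑ j ∈ Finset.range (⌊x + 2 * a - b⌋.toNat),
                (ascPochhammer ℂ j).eval ((b : ℂ) - (a : ℂ)) *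
                  (ascPochhammer ℂ j).eval (1 - (a : ℂ)) / (j.factorial * (x : ℂ) ^ j)) -
          (x : ℂ) ^ (-(a : ℂ)) * Complex.exp (-(x : ℂ)) / Complex.Gamma ((b : ℂ) - (a : ℂ)) *
            (Real.cos (Real.pi * a) : ℂ))
      =O[atTop] fun x : ℝ => x ^ (-a - 1 / 2) * Real.exp (-x) := by
  obtain ⟨n, hn⟩ := exists_nat_gt (-a)
  obtain ⟨C, X0, hC, hX0, h⟩ := KS.est_all n a b (by linarith) ha hb hba (|2 * a - b| + 1) (by positivity)
  apply IsBigO.of_bound C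
  filter_upwards [eventually_ge_atTop (X0 + |2 * a - b| + 2)] with x hx
  have habs := abs_nonneg (2 * a - b)
  have hx0 : 0 < x := by linarith
  have l1 := neg_abs_le (2 * a - b)
  have l2 := le_abs_self (2 * a - b)
  have hfl : 0 ≤ ⌊x + 2 * a - b⌋ := Int.floor_nonneg.mpr (by linarith)
  have hm : ((⌊x + 2 * a - b⌋.toNat : ℕ) : ℝ) = (⌊x + 2 * a - b⌋ : ℝ) := by
    exact_mod_cast congrArg (Int.cast (R := ℝ)) (Int.toNat_of_nonneg hfl)
  have f1 := Int.floor_le (x + 2 * a - b)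
  have f2 := Int.lt_floor_add_one (x + 2 * a - b)
  have key := h x (by linarith) (⌊x + 2 * a - b⌋.toNat) (by
    rw [hm, abs_le]
    constructor <;> linarith)
  generalize ⌊x + 2 * a - b⌋.toNat = m at key
  have e1 : (b : ℂ) - (a : ℂ) = ((b - a : ℝ) : ℂ) := by push_cast; rfl
  have e2 : (a : ℂ) - (b : ℂ) = ((a - b : ℝ) : ℂ) := by push_cast; rfl
  have e3 : (1 : ℂ) - (a : ℂ) = ((1 - a : ℝ) : ℂ) := by push_cast; rfl
  have e4 : -(x : ℂ) = ((-x : ℝ) : ℂ) := by push_cast; rfl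
  have e5 : -(a : ℂ) = ((-a : ℝ) : ℂ) := by push_cast; rfl
  have hp : 0 < x ^ (-a - 1 / 2) * Real.exp (-x) := by positivity
  rw [Real.norm_eq_abs (x ^ (-a - 1 / 2) * Real.exp (-x)), abs_of_pos hp]
  refine le_of_eq_of_le ?_ key
  rw [← Real.norm_eq_abs, ← Complex.norm_real]
  congr 1
  unfold kummer KS.G
  rw [e1, e2, e3, e4, e5, KS.kummer_cast, Complex.Gamma_ofReal, Complex.Gamma_ofReal, Complex.Gamma_ofReal,
    ← Complex.ofReal_cpow hx0.le, ← Complex.ofReal_cpow hx0.le, ← Complex.ofReal_exp]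
  simp only [KS.asc_cast]
  simp only [Complex.ofReal_sub, Complex.ofReal_mul, Complex.ofReal_div, Complex.ofReal_sum, Complex.ofReal_pow,
    Complex.ofReal_natCast, Complex.ofReal_one]
end
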